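/- arXiv:1512.00231 — 2 statements merged into one kernel-verified Lean document; each statement's English description precedes it below -/
import Mathlib

section
/- Let σ be a real-valued function on the family of convex bodies of ℝ^N together with the empty set, with σ(∅) = 0, such that: σ(K ∪ L) + σ(K ∩ L) = σ(K) + σ(L) whenever K, L and K ∪ L are convex bodies; σ(T(K)) = σ(K) for every rigid motion (isometry) T of ℝ^N; σ(K) = 0 whenever K is a convex body of dimension strictly less than N; and σ(K_i) → σ(K) whenever K_i is a decreasing sequence of convex bodies converging to a convex body K in the Hausdorff metric. Then there exists a constant c ∈ ℝ such that σ(K) = c · vol_N(K) for every convex body K, where vol_N is the N-dimensional Lebesgue measure. -/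
open Filter Topology MeasureTheory

noncomputable section

/-- A convex body in `ℝ^N` is a nonempty compact convex subset. -/
def IsConvexBody {N : ℕ} (K : Set (EuclideanSpace ℝ (Fin N))) : Prop :=
  K.Nonempty ∧ IsCompact K ∧ Convex ℝ K

namespace VT
open scoped Pointwise
open Module

/-- compact convex, possibly empty -/
def CC {V : Type} [NormedAddCommGroup V] [InnerProductSpace ℝ V] (K : Set V) : Prop :=
  IsCompact K ∧ Convex ℝ K

/-- reflection -/
def rf {V : Type} [NormedAddCommGroup V] [InnerProductSpace ℝ V] (u x : V) : V :=
  x - (2 * inner ℝ u x / inner ℝ u u) • u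

structure Good {V : Type} [NormedAddCommGroup V] [InnerProductSpace ℝ V]
    (σ : Set V → ℝ) : Prop where
  empty : σ ∅ = 0
  val : ∀ K L, CC K → CC L → Convex ℝ (K ∪ L) → σ (K ∪ L) + σ (K ∩ L) = σ K + σ L
  trans : ∀ (v : V) K, CC K → σ ({v} + K) = σ K
  refl : ∀ (u : V) K, CC K → σ (rf u '' K) = σ K
  flat : ∀ (u : V) (c : ℝ) K, CC K → u ≠ 0 → (∀ x ∈ K, inner ℝ u x = c) → σ K = 0
  cont : ∀ K : ℕ → Set V, (∀ i, CC (K i)) → Antitone K →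
    Tendsto (fun i => σ (K i)) atTop (𝓝 (σ (⋂ i, K i)))

def Cubes {V : Type} [NormedAddCommGroup V] [InnerProductSpace ℝ V]
    (σ : Set V → ℝ) : Prop :=
  ∀ (ι : Type) [Fintype ι] (b : ι → V), Orthonormal ℝ b → Fintype.card ι = finrank ℝ V →
    σ {x | ∀ i, inner ℝ (b i) x ∈ Set.Icc (0:ℝ) 1} = 0

structure Simp {V : Type} [NormedAddCommGroup V] [InnerProductSpace ℝ V]
    (φ : Set V → ℝ) : Prop where
  empty : φ ∅ = 0
  flat : ∀ (u : V) (c : ℝ) K, CC K → u ≠ 0 → (∀ x ∈ K, inner ℝ u x = c) → φ K = 0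
  cut : ∀ (u : V) (c : ℝ) K, CC K → u ≠ 0 →
    φ K = φ (K ∩ {x | inner ℝ u x ≤ c}) + φ (K ∩ {x | c ≤ inner ℝ u x})

section basics
variable {V : Type} [NormedAddCommGroup V] [InnerProductSpace ℝ V]

lemma CC.add {K L : Set V} (hK : CC K) (hL : CC L) : CC (K + L) :=
  ⟨hK.1.add hL.1, hK.2.add hL.2⟩

lemma CC.smul {K : Set V} (hK : CC K) (t : ℝ) : CC (t • K) :=
  ⟨hK.1.smul t, hK.2.smul t⟩

lemma CC.sing (v : V) : CC ({v} : Set V) := ⟨isCompact_singleton, convex_singleton v⟩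

lemma CC.emp : CC (∅ : Set V) := ⟨isCompact_empty, convex_empty⟩

lemma CC.inter {K L : Set V} (hK : CC K) (hL : IsClosed L) (hL' : Convex ℝ L) : CC (K ∩ L) :=
  ⟨hK.1.inter_right hL, hK.2.inter hL'⟩

lemma closed_le (u : V) (c : ℝ) : IsClosed {x : V | inner ℝ u x ≤ c} :=
  isClosed_le (by fun_prop) continuous_const

lemma closed_ge (u : V) (c : ℝ) : IsClosed {x : V | c ≤ inner ℝ u x} :=
  isClosed_le continuous_const (by fun_prop)

lemma convex_le (u : V) (c : ℝ) : Convex ℝ {x : V | inner ℝ u x ≤ c} :=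
  convex_halfSpace_le (innerSL ℝ u).isLinear c

lemma convex_ge (u : V) (c : ℝ) : Convex ℝ {x : V | c ≤ inner ℝ u x} :=
  convex_halfSpace_ge (innerSL ℝ u).isLinear c

lemma CC.le {K : Set V} (hK : CC K) (u : V) (c : ℝ) : CC (K ∩ {x : V | inner ℝ u x ≤ c}) :=
  hK.inter (closed_le u c) (convex_le u c)

lemma CC.ge {K : Set V} (hK : CC K) (u : V) (c : ℝ) : CC (K ∩ {x : V | c ≤ inner ℝ u x}) :=
  hK.inter (closed_ge u c) (convex_ge u c)

lemma CC.ball [FiniteDimensional ℝ V] (r : ℝ) : CC (Metric.closedBall (0 : V) r) :=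
  ⟨isCompact_closedBall _ _, convex_closedBall _ _⟩

lemma Good.simp {σ : Set V → ℝ} (h : Good σ) : Simp σ where
  empty := h.empty
  flat := h.flat
  cut := by
    intro u c K hK hu
    have hun : (K ∩ {x | inner ℝ u x ≤ c}) ∪ (K ∩ {x | c ≤ inner ℝ u x}) = K := by
      ext x
      simp only [Set.mem_union, Set.mem_inter_iff, Set.mem_ofPred_eq]
      have := le_total (inner ℝ u x) c
      tauto
    have := h.val _ _ (hK.le u c) (hK.ge u c) (by rw [hun]; exact hK.2)
    rw [hun] at this
    rw [← this]
    rw [h.flat u c ((K ∩ {x | inner ℝ u x ≤ c}) ∩ (K ∩ {x | c ≤ inner ℝ u x})), add_zero]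
    · exact (hK.le u c).inter (hK.ge u c).1.isClosed (hK.ge u c).2
    · exact hu
    · rintro x ⟨⟨_, h1⟩, ⟨_, h2⟩⟩
      exact le_antisymm h1 h2

/-- continuity criterion -/
lemma tendsto_of_close {σ : Set V → ℝ}
    (hc : ∀ K : ℕ → Set V, (∀ i, CC (K i)) → Antitone K →
    Tendsto (fun i => σ (K i)) atTop (𝓝 (σ (⋂ i, K i))))
    {K : ℕ → Set V} {K0 : Set V} {e : ℕ → ℝ} (hK : ∀ i, CC (K i))
    (hanti : Antitone K) (h0 : CC K0) (hsub : ∀ i, K0 ⊆ K i)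
    (he : Tendsto e atTop (𝓝 0)) (hclose : ∀ i, K i ⊆ K0 + Metric.closedBall 0 (e i)) :
    Tendsto (fun i => σ (K i)) atTop (𝓝 (σ K0)) := by
  have : (⋂ i, K i) = K0 := by
    apply Set.Subset.antisymm _ (Set.subset_iInter hsub)
    intro x hx
    rw [← h0.1.isClosed.closure_eq, Metric.mem_closure_iff]
    intro ε hε
    obtain ⟨i, hi⟩ := (he.eventually (gt_mem_nhds hε)).exists
    obtain ⟨y, hy, z, hz, rfl⟩ := hclose i (Set.mem_iInter.1 hx i)
    refine ⟨y, hy, ?_⟩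
    have : ‖z‖ ≤ e i := by simpa using hz
    simp [dist_eq_norm]; linarith
  rw [← this]
  exact hc K hK hanti

lemma smul_close {σ : Set V → ℝ}
    (hc : ∀ K : ℕ → Set V, (∀ i, CC (K i)) → Antitone K →
    Tendsto (fun i => σ (K i)) atTop (𝓝 (σ (⋂ i, K i))))
    {K L : Set V} (hK : CC K) (hL : CC L) (h0 : (0 : V) ∈ K) {t : ℝ} (ht : 0 ≤ t) {u : ℕ → ℝ}
    (hu : Antitone u) (hut : Tendsto u atTop (𝓝 t)) :
    Tendsto (fun i => σ (u i • K + L)) atTop (𝓝 (σ (t • K + L))) := by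
  have hle : ∀ i, t ≤ u i := fun i => hu.le_of_tendsto hut i
  have hmono : ∀ a b : ℝ, 0 ≤ a → a ≤ b → a • K ⊆ b • K := by
    rintro a b ha hab _ ⟨x, hx, rfl⟩
    rcases (ha.trans hab).eq_or_lt with hb | hb
    · have : a = b := by linarith
      exact ⟨x, hx, by simp [this]⟩
    · refine ⟨(a / b) • x, ?_, ?_⟩
      · exact hK.2.smul_mem_of_zero_mem h0 hx ⟨by positivity, by rw [div_le_one hb]; exact hab⟩
      · simp only [smul_smul]; congr 1; field_simp
  obtain ⟨C, hC⟩ := hK.1.isBounded.exists_norm_le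
  refine tendsto_of_close hc (e := fun i => (u i - t) * C) (fun i => (hK.smul _).add hL) ?_
    ((hK.smul _).add hL) ?_ ?_ ?_
  · intro i j hij
    exact Set.add_subset_add_right (hmono _ _ (ht.trans (hle j)) (hu hij))
  · intro i
    exact Set.add_subset_add_right (hmono _ _ ht (hle i))
  · simpa using (hut.sub_const t).mul_const C
  · rintro i _ ⟨_, ⟨x, hx, rfl⟩, l, hl, rfl⟩
    refine ⟨t • x + l, ⟨t • x, ⟨x, hx, rfl⟩, l, hl, rfl⟩, (u i - t) • x, ?_, ?_⟩
    · simp only [Metric.mem_closedBall, dist_zero_right, norm_smul, Real.norm_eq_abs]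
      rw [abs_of_nonneg (by linarith [hle i])]
      exact mul_le_mul_of_nonneg_left (hC x hx) (by linarith [hle i])
    · simp only [sub_smul]; abel

end basics

lemma additive_lin (f : ℝ → ℝ) (hadd : ∀ s t, 0 ≤ s → 0 ≤ t → f (s + t) = f s + f t)
    (hc : ∀ t, 0 ≤ t → ∀ u : ℕ → ℝ, Antitone u → Tendsto u atTop (𝓝 t) →
      Tendsto (fun i => f (u i)) atTop (𝓝 (f t))) (t : ℝ) (ht : 0 ≤ t) : f t = t * f 1 := by
  have h0 : f 0 = 0 := by have := hadd 0 0 le_rfl le_rfl; simp at this; exact this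
  have hn : ∀ (n : ℕ) (s : ℝ), 0 ≤ s → f (n * s) = n * f s := by
    intro n s hs
    induction n with
    | zero => simp [h0]
    | succ k ih => push_cast; rw [add_mul, one_mul, hadd _ _ (by positivity) hs, ih]; ring
  have hq : ∀ a b : ℕ, b ≠ 0 → f (a / b) = a / b * f 1 := by
    intro a b hb
    have hb' : (b : ℝ) ≠ 0 := by exact_mod_cast hb
    have h1 := hn b (a / b) (by positivity)
    have h2 := hn a 1 (by norm_num)
    rw [mul_div_cancel₀ _ hb', ← mul_one (a : ℝ), h2] at h1
    field_simp
    rw [mul_one] at h1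
    linarith
  let u : ℕ → ℝ := fun i => ((⌊t * 2 ^ i⌋₊ + 1 : ℕ) : ℝ) / ((2 ^ i : ℕ) : ℝ)
  have hu : ∀ i, f (u i) = u i * f 1 := fun i => hq _ _ (by positivity)
  have hanti : Antitone u := by
    apply antitone_nat_of_succ_le
    intro i
    simp only [u]
    rw [div_le_div_iff₀ (by positivity) (by positivity)]
    have : ⌊t * 2 ^ (i + 1)⌋₊ + 1 ≤ (⌊t * 2 ^ i⌋₊ + 1) * 2 := by
      have : ⌊t * 2 ^ (i + 1)⌋₊ < (⌊t * 2 ^ i⌋₊ + 1) * 2 := by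
        rw [Nat.floor_lt (by positivity)]
        push_cast
        have := Nat.lt_floor_add_one (t * 2 ^ i)
        rw [pow_succ]; linarith
      omega
    have h3 : (⌊t * 2 ^ (i + 1)⌋₊ + 1) * 2 ^ i ≤ (⌊t * 2 ^ i⌋₊ + 1) * 2 ^ (i + 1) := by
      rw [pow_succ]
      calc _ ≤ ((⌊t * 2 ^ i⌋₊ + 1) * 2) * 2 ^ i := Nat.mul_le_mul_right _ this
        _ = _ := by ring
    exact_mod_cast h3
  have hlim : Tendsto u atTop (𝓝 t) := by
    have h4 : Tendsto (fun i : ℕ => t + (1 / 2 : ℝ) ^ i) atTop (𝓝 t) := by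
      simpa using (tendsto_pow_atTop_nhds_zero_of_lt_one (r := (1 / 2 : ℝ)) (by norm_num)
        (by norm_num)).const_add t
    refine tendsto_of_tendsto_of_tendsto_of_le_of_le tendsto_const_nhds h4 ?_ ?_
    · intro i
      simp only [u]
      rw [le_div_iff₀ (by positivity)]
      push_cast
      exact (Nat.lt_floor_add_one (t * 2 ^ i)).le
    · intro i
      simp only [u]
      rw [div_le_iff₀ (by positivity)]
      push_cast
      have := Nat.floor_le (a := t * 2 ^ i) (by positivity)
      rw [add_mul, ← mul_pow]; norm_num; exact this
  have h5 := hc t ht u hanti hlim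
  simp only [hu] at h5
  exact tendsto_nhds_unique h5 (hlim.mul_const _)

end VT

namespace VT
open scoped Pointwise
open Module

def Sq (m : ℝ) : Set (ℕ → ℝ) := {x | Antitone x ∧ ∀ j, x j ∈ Set.Icc (0:ℝ) m}

lemma Sq_compact (m : ℝ) : IsCompact (Sq m) := by
  have h : Sq m = (Set.univ.pi fun _ : ℕ => Set.Icc (0:ℝ) m) ∩ {x | Antitone x} := by
    ext x
    exact ⟨fun h => ⟨fun j _ => h.2 j, h.1⟩, fun h => ⟨h.2, fun j => h.1 j trivial⟩⟩
  rw [h]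
  refine (isCompact_univ_pi fun _ => isCompact_Icc).inter_right ?_
  have : {x : ℕ → ℝ | Antitone x} = ⋂ i : ℕ, {x | x (i + 1) ≤ x i} := by
    ext x
    simp only [Set.mem_iInter, Set.mem_ofPred_eq]
    exact ⟨fun h i => h (Nat.le_succ i), antitone_nat_of_succ_le⟩
  rw [this]
  exact isClosed_iInter fun i => isClosed_le (by fun_prop) (by fun_prop)

lemma Sq_convex (m : ℝ) : Convex ℝ (Sq m) := by
  rintro x ⟨hx, hx'⟩ y ⟨hy, hy'⟩ a b ha hb hab
  refine ⟨?_, fun j => ?_⟩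
  · intro i j hij
    have := hx hij
    have := hy hij
    simp only [Pi.add_apply, Pi.smul_apply, smul_eq_mul]
    gcongr
  · exact (convex_Icc (0:ℝ) m) (hx' j) (hy' j) ha hb hab

variable {V : Type} [NormedAddCommGroup V] [InnerProductSpace ℝ V]

def ev (w : ℕ → V) (d : ℕ) : (ℕ → ℝ) →ₗ[ℝ] V :=
  ∑ j ∈ Finset.range d, (LinearMap.proj j : (ℕ → ℝ) →ₗ[ℝ] ℝ).smulRight (w j)

lemma ev_apply (w : ℕ → V) (d : ℕ) (x : ℕ → ℝ) :
    ev w d x = ∑ j ∈ Finset.range d, x j • w j := by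
  simp [ev]

lemma ev_cont (w : ℕ → V) (d : ℕ) : Continuous (ev w d) := by
  have : (ev w d : (ℕ → ℝ) → V) = fun x => ∑ j ∈ Finset.range d, x j • w j := by
    ext x; exact ev_apply w d x
  rw [this]; fun_prop

lemma ev_CC (w : ℕ → V) (d : ℕ) {S : Set (ℕ → ℝ)} (hS : IsCompact S) (hS' : Convex ℝ S) :
    CC (ev w d '' S) :=
  ⟨hS.image (ev_cont w d), hS'.linear_image _⟩

/-- the path simplex -/
def T (w : ℕ → V) (d : ℕ) (m : ℝ) : Set V := ev w d '' Sq m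

lemma T_CC (w : ℕ → V) (d : ℕ) (m : ℝ) : CC (T w d m) := ev_CC w d (Sq_compact m) (Sq_convex m)

lemma zero_mem_Sq {m : ℝ} (hm : 0 ≤ m) : (0 : ℕ → ℝ) ∈ Sq m :=
  ⟨fun _ _ _ => le_rfl, fun _ => ⟨le_rfl, hm⟩⟩

lemma zero_mem_T (w : ℕ → V) (d : ℕ) {m : ℝ} (hm : 0 ≤ m) : (0 : V) ∈ T w d m :=
  ⟨0, zero_mem_Sq hm, map_zero _⟩

lemma T_dim_zero (w : ℕ → V) {m : ℝ} (hm : 0 ≤ m) : T w 0 m = {0} := by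
  apply Set.Subset.antisymm
  · rintro _ ⟨x, _, rfl⟩; simp [ev_apply]
  · rintro _ rfl; exact zero_mem_T w 0 hm

lemma Sq_smul {m : ℝ} (hm : 0 ≤ m) : Sq m = m • Sq 1 := by
  rcases hm.eq_or_lt with rfl | hm
  · rw [Set.zero_smul_set ⟨0, zero_mem_Sq zero_le_one⟩]
    ext x
    constructor
    · rintro ⟨_, h⟩
      simp only [Set.Icc_self, Set.mem_singleton_iff] at h
      exact funext h
    · rintro rfl; exact zero_mem_Sq le_rfl
  · ext x
    rw [Set.mem_smul_set_iff_inv_smul_mem₀ hm.ne']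
    constructor
    · rintro ⟨h1, h2⟩
      refine ⟨fun i j hij => ?_, fun j => ⟨?_, ?_⟩⟩
      · have := h1 hij
        simp only [Pi.smul_apply, smul_eq_mul]; gcongr
      · have := (h2 j).1
        simp only [Pi.smul_apply, smul_eq_mul]; positivity
      · have := (h2 j).2
        simp only [Pi.smul_apply, smul_eq_mul]; rw [inv_mul_le_iff₀ hm]; simpa using this
    · rintro ⟨h1, h2⟩
      refine ⟨fun i j hij => ?_, fun j => ⟨?_, ?_⟩⟩
      · have := h1 hij
        simp only [Pi.smul_apply, smul_eq_mul] at this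
        exact le_of_mul_le_mul_left this (by positivity)
      · have := (h2 j).1
        simp only [Pi.smul_apply, smul_eq_mul] at this
        exact nonneg_of_mul_nonneg_right this (by positivity)
      · have := (h2 j).2
        simp only [Pi.smul_apply, smul_eq_mul] at this; rw [inv_mul_le_iff₀ hm] at this
        simpa using this

lemma T_smul (w : ℕ → V) (d : ℕ) {m : ℝ} (hm : 0 ≤ m) : T w d m = m • T w d 1 := by
  unfold T
  rw [Sq_smul hm, Set.image_smul_comm]
  intro b; simp

lemma val_cut {σ : Set V → ℝ} (h : Good σ) (w : ℕ → V) (d i : ℕ) (c : ℝ) {U : Set (ℕ → ℝ)}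
    (hU : IsCompact U) (hU' : Convex ℝ U) {L : Set V} (hL : CC L) :
    σ (ev w d '' U + L) = σ (ev w d '' (U ∩ {x | c ≤ x i}) + L) +
      (σ (ev w d '' (U ∩ {x | x i ≤ c}) + L) - σ (ev w d '' (U ∩ {x | x i = c}) + L)) := by
  have c1 : IsClosed {x : ℕ → ℝ | c ≤ x i} := isClosed_le (by fun_prop) (by fun_prop)
  have c2 : IsClosed {x : ℕ → ℝ | x i ≤ c} := isClosed_le (by fun_prop) (by fun_prop)
  have v1 : Convex ℝ {x : ℕ → ℝ | c ≤ x i} :=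
    convex_halfSpace_ge (LinearMap.proj i : (ℕ → ℝ) →ₗ[ℝ] ℝ).isLinear c
  have v2 : Convex ℝ {x : ℕ → ℝ | x i ≤ c} :=
    convex_halfSpace_le (LinearMap.proj i : (ℕ → ℝ) →ₗ[ℝ] ℝ).isLinear c
  have hun : (ev w d '' (U ∩ {x | c ≤ x i}) + L) ∪ (ev w d '' (U ∩ {x | x i ≤ c}) + L)
      = ev w d '' U + L := by
    rw [← Set.union_add, ← Set.image_union]
    congr 2
    ext x
    simp only [Set.mem_union, Set.mem_inter_iff, Set.mem_ofPred_eq]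
    have := le_total c (x i)
    tauto
  have hin : (ev w d '' (U ∩ {x | c ≤ x i}) + L) ∩ (ev w d '' (U ∩ {x | x i ≤ c}) + L)
      = ev w d '' (U ∩ {x | x i = c}) + L := by
    apply Set.Subset.antisymm
    · rintro z ⟨⟨_, ⟨a, ⟨ha, ha'⟩, rfl⟩, l, hl, rfl⟩, ⟨_, ⟨b, ⟨hb, hb'⟩, rfl⟩, l', hl', hz⟩⟩
      simp only [Set.mem_ofPred_eq] at ha' hb'
      have hz : ev w d b + l' = ev w d a + l := hz
      obtain ⟨p, q, hp, hq, hpq, hc⟩ : ∃ p q : ℝ, 0 ≤ p ∧ 0 ≤ q ∧ p + q = 1 ∧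
          p * a i + q * b i = c := by
        rcases (hb'.trans ha').eq_or_lt with he | he
        · exact ⟨1, 0, by norm_num, le_rfl, by norm_num, by linarith⟩
        · have hne : a i - b i ≠ 0 := by linarith
          refine ⟨(c - b i) / (a i - b i), (a i - c) / (a i - b i), ?_, ?_, ?_, ?_⟩
          · exact div_nonneg (by linarith) (by linarith)
          · exact div_nonneg (by linarith) (by linarith)
          · field_simp; ring
          · field_simp; ring
      refine ⟨ev w d (p • a + q • b), ⟨_, ⟨hU' ha hb hp hq hpq, by simpa using hc⟩, rfl⟩,
        p • l + q • l', hL.2 hl hl' hp hq hpq, ?_⟩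
      simp only [map_add, map_smul]
      calc p • ev w d a + q • ev w d b + (p • l + q • l')
          = p • (ev w d a + l) + q • (ev w d b + l') := by
            simp only [smul_add]; abel
        _ = (p + q) • (ev w d a + l) := by rw [hz, add_smul]
        _ = _ := by rw [hpq, one_smul]
    · refine Set.subset_inter ?_ ?_ <;> refine Set.add_subset_add_right (Set.image_mono ?_)
      · rintro x ⟨h1, h2⟩; exact ⟨h1, le_of_eq h2.symm⟩
      · rintro x ⟨h1, h2⟩; exact ⟨h1, le_of_eq h2⟩
  have := h.val _ _ ((ev_CC w d (hU.inter_right c1) (hU'.inter v1)).add hL)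
    ((ev_CC w d (hU.inter_right c2) (hU'.inter v2)).add hL)
    (by rw [hun]; exact ((ev_CC w d hU hU').add hL).2)
  rw [hun, hin] at this
  linarith

def Uc (m s : ℝ) (i : ℕ) : Set (ℕ → ℝ) := Sq m ∩ {x | ∀ j < i, s ≤ x j}

lemma Uc_compact (m s : ℝ) (i : ℕ) : IsCompact (Uc m s i) := by
  refine (Sq_compact m).inter_right ?_
  have : {x : ℕ → ℝ | ∀ j < i, s ≤ x j} = ⋂ j, ⋂ (_ : j < i), {x | s ≤ x j} := by
    ext; simp
  rw [this]
  exact isClosed_iInter fun j => isClosed_iInter fun _ => isClosed_le (by fun_prop) (by fun_prop)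

lemma Uc_convex (m s : ℝ) (i : ℕ) : Convex ℝ (Uc m s i) := by
  refine (Sq_convex m).inter ?_
  have : {x : ℕ → ℝ | ∀ j < i, s ≤ x j} = ⋂ j, ⋂ (_ : j < i), {x | s ≤ x j} := by
    ext; simp
  rw [this]
  exact convex_iInter fun j => convex_iInter fun _ =>
    convex_halfSpace_ge (LinearMap.proj j : (ℕ → ℝ) →ₗ[ℝ] ℝ).isLinear s

lemma chain {σ : Set V → ℝ} (h : Good σ) (w : ℕ → V) (d : ℕ) (m s : ℝ) {L : Set V} (hL : CC L)
    (k : ℕ) : σ (T w d m + L) = σ (ev w d '' Uc m s k + L) +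
      ∑ i ∈ Finset.range k, (σ (ev w d '' (Uc m s i ∩ {x | x i ≤ s}) + L)
        - σ (ev w d '' (Uc m s i ∩ {x | x i = s}) + L)) := by
  induction k with
  | zero => simp [Uc, T]
  | succ k ih =>
    rw [ih, val_cut h w d k s (Uc_compact m s k) (Uc_convex m s k) hL, Finset.sum_range_succ]
    have : Uc m s k ∩ {x | s ≤ x k} = Uc m s (k + 1) := by
      ext x
      simp only [Uc, Set.mem_inter_iff, Set.mem_ofPred_eq, and_assoc, Nat.lt_succ_iff_lt_or_eq]
      constructor
      · rintro ⟨h1, h2, h3⟩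
        refine ⟨h1, ?_⟩
        rintro j (hj | rfl)
        · exact h2 j hj
        · exact h3
      · rintro ⟨h1, h2⟩
        exact ⟨h1, fun j hj => h2 j (Or.inl hj), h2 k (Or.inr rfl)⟩
    rw [this]; ring

/-- the full shifted part -/
lemma Uc_full (w : ℕ → V) (d : ℕ) {r s : ℝ} (hr : 0 ≤ r) (hs : 0 ≤ s) :
    ev w d '' Uc (r + s) s d = {s • ∑ j ∈ Finset.range d, w j} + T w d r := by
  apply Set.Subset.antisymm
  · rintro _ ⟨x, ⟨⟨h1, h2⟩, h3⟩, rfl⟩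
    rw [Set.singleton_add]
    refine ⟨ev w d (fun j => max (x j - s) 0), ⟨_, ⟨?_, ?_⟩, rfl⟩, ?_⟩
    · intro i j hij
      have := h1 hij
      simp only; gcongr
    · intro j
      exact ⟨le_max_right _ _, max_le (by linarith [(h2 j).2]) hr⟩
    · simp only [ev_apply, Finset.smul_sum, ← Finset.sum_add_distrib, ← add_smul]
      refine Finset.sum_congr rfl fun j hj => ?_
      rw [max_eq_left (by linarith [h3 j (Finset.mem_range.1 hj)])]
      congr 1; ring
  · rw [Set.singleton_add]
    rintro _ ⟨_, ⟨x, ⟨h1, h2⟩, rfl⟩, rfl⟩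
    refine ⟨fun j => x j + s, ⟨⟨?_, ?_⟩, ?_⟩, ?_⟩
    · intro i j hij
      have := h1 hij
      simp only; gcongr
    · intro j
      exact ⟨by linarith [(h2 j).1], by linarith [(h2 j).2]⟩
    · intro j _
      simp only; linarith [(h2 j).1]
    · simp only [ev_apply, Finset.smul_sum, ← Finset.sum_add_distrib, ← add_smul]
      refine Finset.sum_congr rfl fun j hj => ?_
      congr 1; ring

lemma Uc_split (w : ℕ → V) (d i : ℕ) (hi : i ≤ d) {r s : ℝ} (hr : 0 ≤ r) (hs : 0 ≤ s)
    (S : Set (ℕ → ℝ)) (hS : S ⊆ Sq s) :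
    ev w d '' (Uc (r + s) s i ∩ {x | (fun j => x (i + j)) ∈ S}) =
      {s • ∑ j ∈ Finset.range i, w j} + (T w i r + ev (fun j => w (i + j)) (d - i) '' S) := by
  have hsum : ∀ x : ℕ → ℝ, ev w d x = ev w i x
      + ev (fun j => w (i + j)) (d - i) (fun j => x (i + j)) := by
    intro x
    simp only [ev_apply]
    conv_lhs => rw [show d = i + (d - i) by omega]
    rw [Finset.sum_range_add]
  apply Set.Subset.antisymm
  · rintro _ ⟨x, ⟨⟨⟨h1, h2⟩, h3⟩, h4⟩, rfl⟩
    rw [Set.singleton_add]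
    refine ⟨_, ⟨ev w i (fun j => max (x j - s) 0), ⟨_, ⟨?_, ?_⟩, rfl⟩, _, ⟨_, h4, rfl⟩, rfl⟩, ?_⟩
    · intro i j hij
      have := h1 hij
      simp only; gcongr
    · intro j
      exact ⟨le_max_right _ _, max_le (by linarith [(h2 j).2]) hr⟩
    · simp only
      rw [hsum x, ← add_assoc]
      congr 1
      simp only [ev_apply, Finset.smul_sum, ← Finset.sum_add_distrib, ← add_smul]
      refine Finset.sum_congr rfl fun j hj => ?_
      rw [max_eq_left (by linarith [h3 j (Finset.mem_range.1 hj)])]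
      congr 1; ring
  · rw [Set.singleton_add]
    rintro _ ⟨_, ⟨_, ⟨y, ⟨h1, h2⟩, rfl⟩, _, ⟨z, hz, rfl⟩, rfl⟩, rfl⟩
    obtain ⟨h3, h4⟩ := hS hz
    have htail : (fun j => (fun j => if j < i then y j + s else z (j - i)) (i + j)) = z := by
      funext j; simp
    refine ⟨fun j => if j < i then y j + s else z (j - i), ⟨⟨⟨?_, ?_⟩, ?_⟩, ?_⟩, ?_⟩
    · intro a b hab
      simp only
      split_ifs with h5 h6
      · have := h1 hab; linarith
      · omega
      · linarith [(h4 (b - i)).2, (h2 a).1]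
      · exact h3 (by omega)
    · intro j
      simp only
      split_ifs
      · exact ⟨by linarith [(h2 j).1], by linarith [(h2 j).2]⟩
      · exact ⟨(h4 _).1, by linarith [(h4 (j - i)).2]⟩
    · intro j hj
      simp only [hj, if_true]; linarith [(h2 j).1]
    · simp only [Set.mem_ofPred_eq]
      rw [htail]; exact hz
    · rw [hsum, htail]
      simp only
      rw [← add_assoc]
      congr 1
      simp only [ev_apply, Finset.smul_sum, ← Finset.sum_add_distrib, ← add_smul]
      refine Finset.sum_congr rfl fun j hj => ?_
      rw [if_pos (Finset.mem_range.1 hj)]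
      congr 1; ring

lemma Uc_le {m s : ℝ} {i : ℕ} : Uc m s i ∩ {x | x i ≤ s} =
    Uc m s i ∩ {x | (fun j => x (i + j)) ∈ Sq s} := by
  ext x
  simp only [Set.mem_inter_iff, Set.mem_ofPred_eq, and_congr_right_iff]
  rintro ⟨⟨h1, h2⟩, h3⟩
  constructor
  · intro h
    exact ⟨fun a b hab => h1 (by omega), fun j => ⟨(h2 _).1, (h1 (by omega)).trans h⟩⟩
  · rintro ⟨_, h⟩; exact (h 0).2

lemma Uc_eq {m s : ℝ} {i : ℕ} : Uc m s i ∩ {x | x i = s} =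
    Uc m s i ∩ {x | (fun j => x (i + j)) ∈ Sq s ∩ {z | z 0 = s}} := by
  ext x
  simp only [Set.mem_inter_iff, Set.mem_ofPred_eq, and_congr_right_iff, add_zero]
  rintro ⟨⟨h1, h2⟩, h3⟩
  constructor
  · intro h
    exact ⟨⟨fun a b hab => h1 (by omega), fun j => ⟨(h2 _).1, (h1 (by omega)).trans h.le⟩⟩, h⟩
  · rintro ⟨_, h⟩; exact h

lemma Sqe_compact (s : ℝ) : IsCompact (Sq s ∩ {z | z 0 = s}) :=
  (Sq_compact s).inter_right (isClosed_eq (by fun_prop) (by fun_prop))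

lemma Sqe_convex (s : ℝ) : Convex ℝ (Sq s ∩ {z | z 0 = s}) :=
  (Sq_convex s).inter (convex_hyperplane (LinearMap.proj 0 : (ℕ → ℝ) →ₗ[ℝ] ℝ).isLinear s)

end VT

namespace VT
open scoped Pointwise
open Module

def Ortho {V : Type} [NormedAddCommGroup V] [InnerProductSpace ℝ V] (w : ℕ → V) (n : ℕ) : Prop :=
  (∀ i < n, w i ≠ 0) ∧ ∀ i < n, ∀ j < n, i ≠ j → inner ℝ (w i) (w j) = 0

/-- polytopes -/
def Po {V : Type} [NormedAddCommGroup V] [InnerProductSpace ℝ V] (l : List (V × ℝ)) : Set V :=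
  {x | ∀ p ∈ l, inner ℝ p.1 x ≤ p.2}

/-- uppers and cone constraints -/
def UC {V : Type} [NormedAddCommGroup V] [InnerProductSpace ℝ V] (U C : List V) : Set V :=
  {x | (∀ a ∈ U, inner ℝ a x ≤ 1) ∧ ∀ a ∈ C, inner ℝ a x ≤ 0}

section
variable {V : Type} [NormedAddCommGroup V] [InnerProductSpace ℝ V]

lemma Po_closed (l : List (V × ℝ)) : IsClosed (Po l) := by
  have : Po l = ⋂ p, ⋂ (_ : p ∈ l), {x | inner ℝ p.1 x ≤ p.2} := by ext; simp [Po]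
  rw [this]
  exact isClosed_iInter fun p => isClosed_iInter fun _ => closed_le _ _

lemma Po_convex (l : List (V × ℝ)) : Convex ℝ (Po l) := by
  have : Po l = ⋂ p, ⋂ (_ : p ∈ l), {x | inner ℝ p.1 x ≤ p.2} := by ext; simp [Po]
  rw [this]
  exact convex_iInter fun p => convex_iInter fun _ => convex_le _ _

lemma UC_eq (U C : List V) : UC U C = Po (U.map (fun a => (a, 1)) ++ C.map (fun a => (a, 0))) := by
  ext x
  simp only [UC, Po, Set.mem_ofPred_eq, List.mem_append, List.mem_map]
  constructor
  · rintro ⟨h1, h2⟩ p (⟨a, ha, rfl⟩ | ⟨a, ha, rfl⟩)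
    · exact h1 a ha
    · exact h2 a ha
  · intro h
    exact ⟨fun a ha => h (a, 1) (Or.inl ⟨a, ha, rfl⟩), fun a ha => h (a, 0) (Or.inr ⟨a, ha, rfl⟩)⟩

lemma UC_CC {U C : List V} (h : IsCompact (UC U C)) : CC (UC U C) :=
  ⟨h, by rw [UC_eq]; exact Po_convex _⟩

lemma eq_zero_of_ray {K : Set V} (hK : IsCompact K) {x : V} (h : ∀ t : ℝ, 0 ≤ t → t • x ∈ K) :
    x = 0 := by
  obtain ⟨C, hC⟩ := hK.isBounded.exists_norm_le
  by_contra hx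
  have hx' : 0 < ‖x‖ := norm_pos_iff.2 hx
  have h0 := hC _ (h 0 le_rfl)
  simp at h0
  have := hC _ (h ((C + 1) / ‖x‖) (by positivity))
  rw [norm_smul, Real.norm_eq_abs, abs_of_nonneg (by positivity), div_mul_cancel₀ _ hx'.ne'] at this
  linarith

/-- the cone from the origin -/
def cn (a w0 : V) (D : Set ((ℝ ∙ a)ᗮ : Submodule ℝ V)) : Set V :=
  insert 0 ((fun p : ℝ × ((ℝ ∙ a)ᗮ : Submodule ℝ V) => p.1 • (w0 + (p.2 : V))) ''
    (Set.Icc (0:ℝ) 1 ×ˢ D))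

lemma cn_CC (a w0 : V) {D : Set ((ℝ ∙ a)ᗮ : Submodule ℝ V)} (hD : CC D) : CC (cn a w0 D) := by
  constructor
  · exact ((isCompact_Icc.prod hD.1).image (by fun_prop)).insert 0
  · have key : ∀ x ∈ cn a w0 D, ∀ t ∈ Set.Icc (0:ℝ) 1, t • x ∈ cn a w0 D := by
      rintro x (rfl | ⟨⟨s, y⟩, ⟨hs, hy⟩, rfl⟩) t ht
      · simp [cn]
      · refine Or.inr ⟨⟨t * s, y⟩, ⟨⟨mul_nonneg ht.1 hs.1, mul_le_one₀ ht.2 hs.1 hs.2⟩, hy⟩, ?_⟩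
        simp [smul_smul]
    intro x hx y hy p q hp hq hpq
    rcases hx with rfl | ⟨⟨s, x⟩, ⟨hs, hx⟩, rfl⟩
    · rw [smul_zero, zero_add]; exact key y hy q ⟨hq, by linarith⟩
    rcases hy with rfl | ⟨⟨t, y⟩, ⟨ht, hy⟩, rfl⟩
    · rw [smul_zero, add_zero]
      exact key _ (Or.inr ⟨⟨s, x⟩, ⟨hs, hx⟩, rfl⟩) p ⟨hp, by linarith⟩
    simp only at hs ht hx hy ⊢
    have hps := mul_nonneg hp hs.1
    have hqt := mul_nonneg hq ht.1
    rcases (add_nonneg hps hqt).eq_or_lt with h0 | h0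
    · have h1 : p * s = 0 := by linarith
      have h2 : q * t = 0 := by linarith
      left; rw [smul_smul, smul_smul, h1, h2]; simp
    · right
      refine ⟨⟨p * s + q * t, (p * s / (p * s + q * t)) • x + (q * t / (p * s + q * t)) • y⟩,
        ⟨⟨h0.le, ?_⟩, ?_⟩, ?_⟩
      · simp only
        nlinarith [hs.2, ht.2]
      · refine hD.2 hx hy (by positivity) (by positivity) ?_
        field_simp
      · simp only [Submodule.coe_add, Submodule.coe_smul, smul_add, smul_smul, add_smul]
        rw [mul_div_cancel₀ _ h0.ne', mul_div_cancel₀ _ h0.ne']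
        abel

lemma mem_perp {a : V} (y : ((ℝ ∙ a)ᗮ : Submodule ℝ V)) : inner ℝ a (y : V) = 0 :=
  Submodule.mem_orthogonal_singleton_iff_inner_right.1 y.2

lemma mem_perp' {a : V} (y : ((ℝ ∙ a)ᗮ : Submodule ℝ V)) : inner ℝ (y : V) a = 0 := by
  rw [real_inner_comm]; exact mem_perp y

lemma cn_simp {φ : Set V → ℝ} (hφ : Simp φ) {a w0 : V} (ha : a ≠ 0) (hw : inner ℝ a w0 = 1)
    (hw' : ∀ y : ((ℝ ∙ a)ᗮ : Submodule ℝ V), inner ℝ (y : V) w0 = 0) :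
    Simp (fun D => φ (cn a w0 D)) := by
  have h0 : φ {0} = 0 := hφ.flat a 0 _ (CC.sing 0) ha (by simp)
  have hv : ∀ (u : ((ℝ ∙ a)ᗮ : Submodule ℝ V)) (c t : ℝ) (y : ((ℝ ∙ a)ᗮ : Submodule ℝ V)),
      inner ℝ ((u : V) - c • a) (t • (w0 + (y : V))) = t * (inner ℝ u y - c) := by
    intro u c t y
    rw [inner_smul_right, inner_sub_left, inner_add_right, inner_add_right, inner_smul_left,
      inner_smul_left, hw, hw', mem_perp]
    simp
  have hne : ∀ (u : ((ℝ ∙ a)ᗮ : Submodule ℝ V)) (c : ℝ), u ≠ 0 → (u : V) - c • a ≠ 0 := by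
    intro u c hu h
    have : inner ℝ (u : V) ((u : V) - c • a) = 0 := by rw [h, inner_zero_right]
    rw [inner_sub_right, inner_smul_right, mem_perp'] at this
    simp at this
    exact hu this
  refine ⟨?_, ?_, ?_⟩
  · simpa [cn] using h0
  · intro u c K hK hu hc
    refine hφ.flat ((u : V) - c • a) 0 _ (cn_CC a w0 hK) (hne u c hu) ?_
    rintro x (rfl | ⟨⟨t, y⟩, ⟨_, hy⟩, rfl⟩)
    · simp
    · simp only [hv, hc y hy]; simp
  · intro u c K hK hu
    rw [hφ.cut ((u : V) - c • a) 0 _ (cn_CC a w0 hK) (hne u c hu)]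
    congr 2
    · ext x
      constructor
      · rintro ⟨rfl | ⟨⟨t, y⟩, ⟨ht, hy⟩, rfl⟩, hx⟩
        · exact Or.inl rfl
        · simp only [Set.mem_ofPred_eq, hv] at hx
          simp only at ht
          rcases ht.1.eq_or_lt with h | h
          · left; simp [← h]
          · right
            refine ⟨⟨t, y⟩, ⟨ht, hy, ?_⟩, rfl⟩
            have := nonpos_of_mul_nonpos_right hx h
            simp only [Set.mem_ofPred_eq]; linarith
      · rintro (rfl | ⟨⟨t, y⟩, ⟨ht, hy, hy'⟩, rfl⟩)
        · exact ⟨Or.inl rfl, by simp⟩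
        · refine ⟨Or.inr ⟨⟨t, y⟩, ⟨ht, hy⟩, rfl⟩, ?_⟩
          simp only [Set.mem_ofPred_eq, hv]
          simp only [Set.mem_ofPred_eq] at hy'
          exact mul_nonpos_of_nonneg_of_nonpos ht.1 (by linarith)
    · ext x
      constructor
      · rintro ⟨rfl | ⟨⟨t, y⟩, ⟨ht, hy⟩, rfl⟩, hx⟩
        · exact Or.inl rfl
        · simp only [Set.mem_ofPred_eq, hv] at hx
          simp only at ht
          rcases ht.1.eq_or_lt with h | h
          · left; simp [← h]
          · right
            refine ⟨⟨t, y⟩, ⟨ht, hy, ?_⟩, rfl⟩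
            have := nonneg_of_mul_nonneg_right hx h
            simp only [Set.mem_ofPred_eq]; linarith
      · rintro (rfl | ⟨⟨t, y⟩, ⟨ht, hy, hy'⟩, rfl⟩)
        · exact ⟨Or.inl rfl, by simp⟩
        · refine ⟨Or.inr ⟨⟨t, y⟩, ⟨ht, hy⟩, rfl⟩, ?_⟩
          simp only [Set.mem_ofPred_eq, hv]
          simp only [Set.mem_ofPred_eq] at hy'
          exact mul_nonneg ht.1 (by linarith)

lemma cn_T (a w0 : V) (w : ℕ → ((ℝ ∙ a)ᗮ : Submodule ℝ V)) (n : ℕ) :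
    cn a w0 (T w n 1) = T (fun j => Nat.casesOn j w0 (fun i => (w i : V))) (n + 1) 1 := by
  have hs : ∀ x : ℕ → ℝ, ev (fun j => Nat.casesOn j w0 (fun i => (w i : V)) : ℕ → V) (n + 1) x
      = x 0 • w0 + ∑ i ∈ Finset.range n, x (i + 1) • (w i : V) := by
    intro x
    rw [ev_apply, Finset.sum_range_succ']
    exact add_comm _ _
  apply Set.Subset.antisymm
  · rintro x (rfl | ⟨⟨t, _⟩, ⟨ht, ⟨y, ⟨h1, h2⟩, rfl⟩⟩, rfl⟩)
    · exact zero_mem_T _ _ zero_le_one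
    · refine ⟨fun j => Nat.casesOn j t (fun i => t * y i), ⟨?_, ?_⟩, ?_⟩
      · apply antitone_nat_of_succ_le
        intro j
        cases j with
        | zero => exact mul_le_of_le_one_right ht.1 (h2 0).2
        | succ j => exact mul_le_mul_of_nonneg_left (h1 (Nat.le_succ j)) ht.1
      · intro j
        cases j with
        | zero => exact ht
        | succ j => exact ⟨mul_nonneg ht.1 (h2 j).1, mul_le_one₀ ht.2 (h2 j).1 (h2 j).2⟩
      · rw [hs]
        simp [ev_apply, Finset.smul_sum, smul_smul]
  · rintro _ ⟨x, ⟨h1, h2⟩, rfl⟩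
    rw [hs]
    rcases (h2 0).1.eq_or_lt with h | h
    · left
      have : ∀ j, x j = 0 := fun j => le_antisymm ((h1 (Nat.zero_le j)).trans h.ge) (h2 j).1
      simp [this]
    · right
      refine ⟨⟨x 0, ev w n (fun j => x (j + 1) / x 0)⟩, ⟨h2 0, ⟨_, ⟨?_, ?_⟩, rfl⟩⟩, ?_⟩
      · intro i j hij
        have := h1 (show i + 1 ≤ j + 1 by omega)
        simp only; gcongr
      · intro j
        exact ⟨div_nonneg (h2 _).1 h.le, by rw [div_le_one h]; exact h1 (Nat.zero_le _)⟩
      · simp only [ev_apply, Submodule.coe_sum, Submodule.coe_smul, smul_add, Finset.smul_sum,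
          smul_smul]
        congr 1
        refine Finset.sum_congr rfl fun j _ => ?_
        rw [mul_div_cancel₀ _ h.ne']

/-- Statement of the polytope theorem in a given space. -/
def PolyThm (V : Type) [NormedAddCommGroup V] [InnerProductSpace ℝ V] (n : ℕ) : Prop :=
  ∀ φ : Set V → ℝ, Simp φ → (∀ w : ℕ → V, Ortho w n → φ (T w n 1) = 0) →
    ∀ l : List (V × ℝ), IsCompact (Po l) → φ (Po l) = 0

lemma cone_case [FiniteDimensional ℝ V] {n : ℕ}
    (IH : ∀ a : V, a ≠ 0 → PolyThm ((ℝ ∙ a)ᗮ : Submodule ℝ V) n)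
    {φ : Set V → ℝ} (hφ : Simp φ) (hT : ∀ w : ℕ → V, Ortho w (n + 1) → φ (T w (n + 1) 1) = 0)
    {v : V} (hv : v ≠ 0)
    (a : V) (C : List V) (hK : IsCompact (UC [a] C)) : φ (UC [a] C) = 0 := by
  have hpos : ∀ x ∈ UC [a] C, x ≠ 0 → 0 < inner ℝ a x := by
    intro x hx hx0
    by_contra hcon
    push Not at hcon
    apply hx0
    refine eq_zero_of_ray hK fun t ht => ⟨?_, ?_⟩
    · intro b hb
      rw [List.mem_singleton] at hb
      rw [hb, inner_smul_right]
      have := mul_nonpos_of_nonneg_of_nonpos ht hcon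
      linarith
    · intro b hb
      rw [inner_smul_right]
      exact mul_nonpos_of_nonneg_of_nonpos ht (hx.2 b hb)
  by_cases ha : a = 0
  · refine hφ.flat v 0 _ (UC_CC hK) hv fun x hx => ?_
    by_cases hx0 : x = 0
    · simp [hx0]
    · have := hpos x hx hx0
      simp [ha] at this
  have haa : inner ℝ a a ≠ 0 := by simpa using ha
  set w0 : V := (inner ℝ a a)⁻¹ • a with hw0
  have hw : inner ℝ a w0 = 1 := by rw [hw0, inner_smul_right, inv_mul_cancel₀ haa]
  have hw' : ∀ y : ((ℝ ∙ a)ᗮ : Submodule ℝ V), inner ℝ (y : V) w0 = 0 := by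
    intro y
    rw [hw0, inner_smul_right, mem_perp', mul_zero]
  set l : List (((ℝ ∙ a)ᗮ : Submodule ℝ V) × ℝ) :=
    C.map (fun c => ((ℝ ∙ a)ᗮ.orthogonalProjectionOnto c, - inner ℝ c w0)) with hl
  have hmem : ∀ y : ((ℝ ∙ a)ᗮ : Submodule ℝ V), y ∈ Po l ↔ ∀ c ∈ C, inner ℝ c (w0 + (y : V)) ≤ 0 := by
    intro y
    simp only [hl, Po, Set.mem_ofPred_eq, List.mem_map, forall_exists_index, and_imp,
      forall_apply_eq_imp_iff₂]
    refine forall₂_congr fun c _ => ?_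
    rw [real_inner_comm, Submodule.inner_orthogonalProjectionOnto_eq_of_mem_left, inner_add_right,
      real_inner_comm]
    constructor <;> intro h <;> linarith
  have hKeq : UC [a] C = cn a w0 (Po l) := by
    apply Set.Subset.antisymm
    · intro x hx
      by_cases hx0 : x = 0
      · exact Or.inl hx0
      have hp := hpos x hx hx0
      have hx1 := hx.1 a (by simp)
      right
      refine ⟨⟨inner ℝ a x, ⟨(inner ℝ a x)⁻¹ • x - w0, ?_⟩⟩, ⟨⟨hp.le, hx1⟩, ?_⟩, ?_⟩
      · rw [Submodule.mem_orthogonal_singleton_iff_inner_right, inner_sub_right, hw,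
          inner_smul_right, inv_mul_cancel₀ hp.ne', sub_self]
      · rw [hmem]
        intro c hc
        simp only [add_sub_cancel]
        rw [inner_smul_right]
        exact mul_nonpos_of_nonneg_of_nonpos (by positivity) (hx.2 c hc)
      · simp only [add_sub_cancel, smul_smul]
        rw [mul_inv_cancel₀ hp.ne', one_smul]
    · rintro x (rfl | ⟨⟨t, y⟩, ⟨ht, hy⟩, rfl⟩)
      · exact ⟨by simp, by simp⟩
      · simp only at ht hy
        rw [hmem] at hy
        refine ⟨?_, ?_⟩
        · intro b hb
          rw [List.mem_singleton] at hb
          rw [hb, inner_smul_right, inner_add_right, hw, mem_perp]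
          linarith [ht.2]
        · intro c hc
          rw [inner_smul_right]
          exact mul_nonpos_of_nonneg_of_nonpos ht.1 (hy c hc)
  have hlc : IsCompact (Po l) := by
    obtain ⟨M, hM⟩ := hK.isBounded.exists_norm_le
    refine Metric.isCompact_of_isClosed_isBounded (Po_closed l) ?_
    rw [isBounded_iff_forall_norm_le]
    refine ⟨M + ‖w0‖, fun y hy => ?_⟩
    have h1 : w0 + (y : V) ∈ UC [a] C := by
      rw [hKeq]
      exact Or.inr ⟨⟨1, y⟩, ⟨⟨zero_le_one, le_rfl⟩, hy⟩, by simp⟩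
    have h2 := hM _ h1
    have h3 : ‖(y : V)‖ ≤ ‖w0 + (y : V)‖ + ‖w0‖ := by
      have := norm_sub_le (w0 + (y : V)) w0
      simpa using this
    rw [Submodule.coe_norm]
    linarith
  rw [hKeq]
  refine IH a ha _ (cn_simp hφ ha hw hw') ?_ l hlc
  intro w ho
  rw [cn_T]
  apply hT
  constructor
  · intro i hi
    cases i with
    | zero =>
      intro h
      simp only at h
      change w0 = 0 at h
      rw [h] at hw
      simp at hw
    | succ i =>
      simp only
      intro h
      exact ho.1 i (by omega) (by simpa using h)
  · intro i hi j hj hij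
    cases i with
    | zero =>
      cases j with
      | zero => omega
      | succ j => simp only; rw [real_inner_comm]; exact hw' _
    | succ i =>
      cases j with
      | zero => exact hw' _
      | succ j =>
        have := ho.2 i (by omega) j (by omega) (by omega)
        simpa using this

lemma UC_case [FiniteDimensional ℝ V] {n : ℕ}
    (IH : ∀ a : V, a ≠ 0 → PolyThm ((ℝ ∙ a)ᗮ : Submodule ℝ V) n)
    {φ : Set V → ℝ} (hφ : Simp φ) (hT : ∀ w : ℕ → V, Ortho w (n + 1) → φ (T w (n + 1) 1) = 0)
    {v : V} (hv : v ≠ 0) (k : ℕ) :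
    ∀ (U C : List V), U.length = k → IsCompact (UC U C) → φ (UC U C) = 0 := by
  induction k with
  | zero =>
    intro U C hU hK
    rw [List.length_eq_zero_iff] at hU
    subst hU
    refine hφ.flat v 0 _ (UC_CC hK) hv fun x hx => ?_
    have : x = 0 := by
      refine eq_zero_of_ray hK fun t ht => ⟨by simp, ?_⟩
      intro b hb
      rw [inner_smul_right]
      exact mul_nonpos_of_nonneg_of_nonpos ht (hx.2 b hb)
    simp [this]
  | succ k ih =>
    intro U C hU hK
    match U, hU with
    | [a], _ => exact cone_case IH hφ hT hv a C hK
    | a :: b :: U, hU =>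
      simp only [List.length_cons] at hU
      by_cases hab : a = b
      · have : UC (a :: b :: U) C = UC (b :: U) C := by
          ext x; simp [UC, hab]
        rw [this] at hK ⊢
        exact ih _ _ (by simp; omega) hK
      · have h1 : UC (a :: b :: U) C ∩ {x | inner ℝ (a - b) x ≤ 0} = UC (b :: U) ((a - b) :: C) := by
          ext x
          simp only [UC, List.mem_cons, forall_eq_or_imp, Set.mem_inter_iff, Set.mem_ofPred_eq,
            inner_sub_left]
          constructor
          · rintro ⟨⟨⟨h1, h2, h3⟩, h4⟩, h5⟩; exact ⟨⟨h2, h3⟩, h5, h4⟩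
          · rintro ⟨⟨h2, h3⟩, h5, h4⟩; exact ⟨⟨⟨by linarith, h2, h3⟩, h4⟩, h5⟩
        have h2 : UC (a :: b :: U) C ∩ {x | 0 ≤ inner ℝ (a - b) x} = UC (a :: U) ((b - a) :: C) := by
          ext x
          simp only [UC, List.mem_cons, forall_eq_or_imp, Set.mem_inter_iff, Set.mem_ofPred_eq,
            inner_sub_left]
          constructor
          · rintro ⟨⟨⟨h1, h2, h3⟩, h4⟩, h5⟩; exact ⟨⟨h1, h3⟩, by linarith, h4⟩
          · rintro ⟨⟨h2, h3⟩, h5, h4⟩; exact ⟨⟨⟨h2, by linarith, h3⟩, h4⟩, by linarith⟩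
        rw [hφ.cut (a - b) 0 _ (UC_CC hK) (sub_ne_zero.2 hab), h1, h2, ih _ _ (by simp; omega),
          ih _ _ (by simp; omega), add_zero]
        · rw [← h2]; exact hK.inter_right (closed_ge _ _)
        · rw [← h1]; exact hK.inter_right (closed_le _ _)

lemma UCPo_case [FiniteDimensional ℝ V] {n : ℕ}
    (IH : ∀ a : V, a ≠ 0 → PolyThm ((ℝ ∙ a)ᗮ : Submodule ℝ V) n)
    {φ : Set V → ℝ} (hφ : Simp φ) (hT : ∀ w : ℕ → V, Ortho w (n + 1) → φ (T w (n + 1) 1) = 0)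
    {v : V} (hv : v ≠ 0) (l : List (V × ℝ)) :
    ∀ (U C : List V), IsCompact (UC U C) → φ (UC U C ∩ Po l) = 0 := by
  induction l with
  | nil =>
    intro U C hK
    have : UC U C ∩ Po [] = UC U C := by simp [Po]
    rw [this]
    exact UC_case IH hφ hT hv _ U C rfl hK
  | cons p l ih =>
    obtain ⟨a, c⟩ := p
    intro U C hK
    have hup : ∀ b, IsCompact (UC (b :: U) C) := by
      intro b
      have : UC (b :: U) C = UC U C ∩ {x | inner ℝ b x ≤ 1} := by
        ext x; simp [UC]; tauto
      rw [this]; exact hK.inter_right (closed_le _ _)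
    rcases lt_trichotomy c 0 with hc | hc | hc
    · have hX : CC (UC U C ∩ Po l) := (UC_CC hK).inter (Po_closed l) (Po_convex l)
      have h1 : UC U C ∩ Po ((a, c) :: l) = (UC U C ∩ Po l) ∩ {x | 1 ≤ inner ℝ (c⁻¹ • a) x} := by
        ext x
        simp only [Po, List.mem_cons, forall_eq_or_imp, Set.mem_inter_iff, Set.mem_ofPred_eq,
          inner_smul_left, RCLike.conj_to_real]
        have : inner ℝ a x ≤ c ↔ 1 ≤ c⁻¹ * inner ℝ a x := by
          rw [← div_eq_inv_mul, le_div_iff_of_neg hc, one_mul]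
        rw [this]; tauto
      rw [h1]
      by_cases hb : c⁻¹ • a = 0
      · have : {x : V | 1 ≤ inner ℝ (c⁻¹ • a) x} = ∅ := by
          ext x; rw [hb]; simp
        rw [this, Set.inter_empty, hφ.empty]
      · have h2 := hφ.cut (c⁻¹ • a) 1 _ hX hb
        have h3 : (UC U C ∩ Po l) ∩ {x | inner ℝ (c⁻¹ • a) x ≤ 1} = UC ((c⁻¹ • a) :: U) C ∩ Po l := by
          ext x
          simp only [UC, List.mem_cons, forall_eq_or_imp, Set.mem_inter_iff, Set.mem_ofPred_eq]
          tauto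
        rw [h3, ih _ _ (hup _), ih _ _ hK] at h2
        linarith
    · have : UC U C ∩ Po ((a, c) :: l) = UC U (a :: C) ∩ Po l := by
        ext x
        simp only [UC, Po, List.mem_cons, forall_eq_or_imp, Set.mem_inter_iff, Set.mem_ofPred_eq, hc]
        tauto
      rw [this]
      apply ih
      have : UC U (a :: C) = UC U C ∩ {x | inner ℝ a x ≤ 0} := by
        ext x; simp [UC]; tauto
      rw [this]; exact hK.inter_right (closed_le _ _)
    · have : UC U C ∩ Po ((a, c) :: l) = UC ((c⁻¹ • a) :: U) C ∩ Po l := by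
        ext x
        simp only [UC, Po, List.mem_cons, forall_eq_or_imp, Set.mem_inter_iff, Set.mem_ofPred_eq,
          inner_smul_left, RCLike.conj_to_real]
        have : inner ℝ a x ≤ c ↔ c⁻¹ * inner ℝ a x ≤ 1 := by
          rw [inv_mul_le_iff₀ hc, mul_one]
        rw [this]; tauto
      rw [this]
      exact ih _ _ (hup _)

lemma exists_box [FiniteDimensional ℝ V] {K : Set V} (hK : IsCompact K) :
    ∃ U : List V, IsCompact (UC U []) ∧ K ⊆ UC U [] := by
  obtain ⟨R, hR0, hR⟩ := hK.isBounded.exists_pos_norm_le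
  let b := stdOrthonormalBasis ℝ V
  refine ⟨(Finset.univ.toList.map fun i => R⁻¹ • b i) ++
    (Finset.univ.toList.map fun i => -(R⁻¹ • b i)), ?_, ?_⟩
  · refine Metric.isCompact_of_isClosed_isBounded (by rw [UC_eq]; exact Po_closed _) ?_
    rw [isBounded_iff_forall_norm_le]
    refine ⟨√(∑ i : Fin (finrank ℝ V), R ^ 2), fun x hx => ?_⟩
    apply Real.le_sqrt_of_sq_le
    rw [← b.sum_sq_norm_inner_right]
    refine Finset.sum_le_sum fun i _ => ?_
    have h1 := hx.1 (R⁻¹ • b i) (by simp)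
    have h2 := hx.1 (-(R⁻¹ • b i)) (by simp)
    rw [inner_neg_left] at h2
    simp only [inner_smul_left, RCLike.conj_to_real] at h1 h2
    rw [inv_mul_le_iff₀ hR0] at h1
    have h3 : -inner ℝ (b i) x ≤ R := by
      rw [← mul_neg, inv_mul_le_iff₀ hR0] at h2; linarith
    rw [Real.norm_eq_abs]
    gcongr
    exact abs_le.2 ⟨by linarith, by linarith⟩
  · intro x hx
    refine ⟨?_, by simp⟩
    have key : ∀ i, |inner ℝ (b i) x| ≤ R := fun i => by
      have := abs_real_inner_le_norm (b i) x
      rw [b.norm_eq_one, one_mul] at this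
      exact this.trans (hR x hx)
    intro a ha
    simp only [List.mem_append, List.mem_map, Finset.mem_toList, Finset.mem_univ, true_and] at ha
    rcases ha with ⟨i, rfl⟩ | ⟨i, rfl⟩
    · simp only [inner_smul_left, RCLike.conj_to_real]
      rw [inv_mul_le_iff₀ hR0, mul_one]
      exact (abs_le.1 (key i)).2
    · rw [inner_neg_left]
      simp only [inner_smul_left, RCLike.conj_to_real]
      rw [← mul_neg, inv_mul_le_iff₀ hR0, mul_one]
      linarith [(abs_le.1 (key i)).1]

end

theorem poly_thm (n : ℕ) : ∀ (V : Type) [NormedAddCommGroup V] [InnerProductSpace ℝ V]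
    [FiniteDimensional ℝ V], finrank ℝ V = n → PolyThm V n := by
  induction n with
  | zero =>
    intro V _ _ _ hV φ hφ hT l hl
    have : Subsingleton V := finrank_zero_iff.1 hV
    rcases (Po l).eq_empty_or_nonempty with h | ⟨x, hx⟩
    · rw [h, hφ.empty]
    · have h1 : Po l = {0} := by
        ext y
        simp only [Set.mem_singleton_iff, Subsingleton.elim y 0, iff_true]
        rwa [Subsingleton.elim 0 x]
      have := hT (fun _ => 0) ⟨fun i hi => by omega, fun i hi => by omega⟩
      rw [T_dim_zero _ zero_le_one] at this
      rw [h1, this]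
  | succ n ih =>
    intro V _ _ _ hV φ hφ hT l hl
    have : Nontrivial V := nontrivial_of_finrank_pos (R := ℝ) (by omega)
    obtain ⟨v, hv⟩ := exists_ne (0 : V)
    obtain ⟨U, hU1, hU2⟩ := exists_box hl
    have := UCPo_case (n := n) ?_ hφ hT hv l U [] hU1
    · rwa [Set.inter_eq_right.2 hU2] at this
    · intro a ha
      have : Fact (finrank ℝ V = n + 1) := ⟨hV⟩
      exact ih _ (Submodule.finrank_orthogonal_span_singleton ha)

lemma sep {V : Type} [NormedAddCommGroup V] [InnerProductSpace ℝ V] [FiniteDimensional ℝ V]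
    {K : Set V} (hK : CC K) {x : V} (hx : x ∉ K) :
    ∃ (u : V) (c : ℝ), (∀ y ∈ K, inner ℝ u y ≤ c) ∧ c < inner ℝ u x := by
  obtain ⟨f, c, h1, h2⟩ := geometric_hahn_banach_closed_point hK.2 hK.1.isClosed hx
  have : CompleteSpace V := FiniteDimensional.complete ℝ V
  refine ⟨(InnerProductSpace.toDual ℝ V).symm f, c, fun y hy => ?_, ?_⟩
  · rw [InnerProductSpace.toDual_symm_apply]; exact (h1 y hy).le
  · rw [InnerProductSpace.toDual_symm_apply]; exact h2

/-- A simple, continuous-from-above functional vanishing on orthoschemes vanishes. -/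
theorem simp_zero {V : Type} [NormedAddCommGroup V] [InnerProductSpace ℝ V]
    [FiniteDimensional ℝ V] {φ : Set V → ℝ} (hφ : Simp φ)
    (hc : ∀ K : ℕ → Set V, (∀ i, CC (K i)) → Antitone K →
      Tendsto (fun i => φ (K i)) atTop (𝓝 (φ (⋂ i, K i))))
    (hT : ∀ w : ℕ → V, Ortho w (finrank ℝ V) → φ (T w (finrank ℝ V) 1) = 0)
    {K : Set V} (hK : CC K) : φ K = 0 := by
  have hP := poly_thm _ V rfl φ hφ hT
  obtain ⟨U, hU1, hU2⟩ := exists_box hK.1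
  let H : Set (V × ℝ) := {p | ∀ y ∈ K, inner ℝ p.1 y ≤ p.2}
  let s : V × ℝ → Set V := fun p => {x | p.2 < inner ℝ p.1 x}
  have hs : ∀ p ∈ H, IsOpen (s p) := fun p _ => isOpen_lt continuous_const (by fun_prop)
  have : ProperSpace V := FiniteDimensional.proper_real V
  obtain ⟨D, hD1, hD2, hD3⟩ := TopologicalSpace.isOpen_biUnion_countable H s hs
  have hD0 : (insert (0, 0) D).Countable := hD2.insert _
  obtain ⟨p, hp⟩ := hD0.exists_eq_range (Set.insert_nonempty _ _)
  have hpH : ∀ i, p i ∈ H := by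
    intro i
    have : p i ∈ insert (0, 0) D := by rw [hp]; exact ⟨i, rfl⟩
    rcases this with h | h
    · rw [h]; intro y _; simp
    · exact hD1 h
  let l0 : List (V × ℝ) := U.map (fun a => (a, 1))
  have hl0 : Po l0 = UC U [] := by rw [UC_eq]; simp [l0]
  let P : ℕ → Set V := fun i => Po (l0 ++ (List.range i).map p)
  have hPmem : ∀ i x, x ∈ P i ↔ x ∈ UC U [] ∧ ∀ j < i, inner ℝ (p j).1 x ≤ (p j).2 := by
    intro i x
    rw [← hl0]
    simp only [P, Po, Set.mem_ofPred_eq, List.mem_append, List.mem_map, List.mem_range]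
    constructor
    · intro h
      exact ⟨fun q hq => h q (Or.inl hq), fun j hj => h _ (Or.inr ⟨j, hj, rfl⟩)⟩
    · rintro ⟨h1, h2⟩ q (hq | ⟨j, hj, rfl⟩)
      · exact h1 q hq
      · exact h2 j hj
  have hPc : ∀ i, CC (P i) := fun i =>
    ⟨hU1.of_isClosed_subset (Po_closed _) fun x hx => ((hPmem i x).1 hx).1, Po_convex _⟩
  have hanti : Antitone P := by
    intro i j hij x hx
    rw [hPmem] at hx ⊢
    exact ⟨hx.1, fun k hk => hx.2 k (by omega)⟩
  have hIntK : (⋂ i, P i) = K := by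
    apply Set.Subset.antisymm
    · intro x hx
      by_contra hxK
      obtain ⟨u, c, h1, h2⟩ := sep hK hxK
      have : x ∈ ⋃ q ∈ H, s q := Set.mem_biUnion (x := (u, c)) h1 h2
      rw [← hD3] at this
      simp only [Set.mem_iUnion] at this
      obtain ⟨q, hq, hxq⟩ := this
      have : q ∈ insert (0, 0) D := Or.inr hq
      rw [hp] at this
      obtain ⟨i, rfl⟩ := this
      have h3 := ((hPmem (i + 1) x).1 (Set.mem_iInter.1 hx (i + 1))).2 i (by omega)
      exact absurd hxq (not_lt.2 h3)
    · refine Set.subset_iInter fun i x hx => ?_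
      rw [hPmem]
      exact ⟨hU2 hx, fun j _ => hpH j x hx⟩
  have h1 := hc P hPc hanti
  rw [hIntK] at h1
  have h2 : ∀ i, φ (P i) = 0 := fun i => hP _ (hPc i).1
  simp only [h2] at h1
  exact (tendsto_nhds_unique h1 tendsto_const_nhds)

end VT

namespace VT
open scoped Pointwise
open Module

section
variable {V : Type} [NormedAddCommGroup V] [InnerProductSpace ℝ V]

lemma ortho_unique {E : Submodule ℝ V} {B : Set V} (hB : ∀ y ∈ B, ∀ x ∈ E, inner ℝ x y = 0)
    {a a' : E} {b b' : V} (hb : b ∈ B) (hb' : b' ∈ B) (h : (a : V) + b = a' + b') :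
    a = a' ∧ b = b' := by
  have h1 : ((a - a' : E) : V) = b' - b := by
    push_cast; rw [sub_eq_sub_iff_add_eq_add, h, add_comm]
  have h2 : inner ℝ ((a - a' : E) : V) ((a - a' : E) : V) = 0 := by
    nth_rewrite 2 [h1]
    rw [inner_sub_right, hB _ hb' _ (Submodule.coe_mem _), hB _ hb _ (Submodule.coe_mem _), sub_zero]
  rw [inner_self_eq_zero] at h2
  have h3 : a - a' = 0 := by exact_mod_cast h2
  have h4 := sub_eq_zero.1 h3
  refine ⟨h4, ?_⟩
  subst h4
  simpa using h

lemma img_CC {E : Submodule ℝ V} {A : Set E} (hA : CC A) : CC (((↑) : E → V) '' A) :=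
  ⟨hA.1.image (by fun_prop), hA.2.linear_image E.subtype⟩

lemma transfer {σ : Set V → ℝ} (h : Good σ) (E : Submodule ℝ V) {B : Set V} (hBc : CC B)
    (hB : ∀ y ∈ B, ∀ x ∈ E, inner ℝ x y = 0) :
    Good (fun A : Set E => σ (((↑) : E → V) '' A + B)) where
  empty := by simpa using h.empty
  val := by
    intro K L hK hL hKL
    have h1 : ((↑) : E → V) '' (K ∪ L) + B = (((↑) : E → V) '' K + B) ∪ (((↑) : E → V) '' L + B) := by
      rw [Set.image_union, Set.union_add]
    have h2 : ((↑) : E → V) '' (K ∩ L) + B = (((↑) : E → V) '' K + B) ∩ (((↑) : E → V) '' L + B) := by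
      apply Set.Subset.antisymm
      · rintro _ ⟨_, ⟨a, ha, rfl⟩, b, hb, rfl⟩
        exact ⟨⟨a, ⟨a, ha.1, rfl⟩, b, hb, rfl⟩, ⟨a, ⟨a, ha.2, rfl⟩, b, hb, rfl⟩⟩
      · rintro _ ⟨⟨_, ⟨a, ha, rfl⟩, b, hb, rfl⟩, ⟨_, ⟨a', ha', rfl⟩, b', hb', hab⟩⟩
        obtain ⟨rfl, rfl⟩ := ortho_unique hB hb' hb hab
        exact ⟨a', ⟨a', ⟨ha, ha'⟩, rfl⟩, b', hb, rfl⟩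
    rw [h1, h2]
    apply h.val _ _ ((img_CC hK).add hBc) ((img_CC hL).add hBc)
    rw [← h1]
    exact (hKL.linear_image E.subtype).add hBc.2
  trans := by
    intro v K hK
    have : ((↑) : E → V) '' ({v} + K) + B = {(v : V)} + (((↑) : E → V) '' K + B) := by
      rw [← add_assoc]
      congr 1
      have := Set.image_add E.subtype (s := {v}) (t := K)
      simpa using this
    rw [this, h.trans _ _ ((img_CC hK).add hBc)]
  refl := by
    intro u K hK
    have : ((↑) : E → V) '' (rf u '' K) + B = rf (u : V) '' (((↑) : E → V) '' K + B) := by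
      have key : ∀ (a : E) (b : V), b ∈ B → rf (u : V) (a + b) = (rf u a : E) + b := by
        intro a b hb
        simp only [rf, inner_add_right, hB b hb u u.2, add_zero, Submodule.coe_inner]
        push_cast
        abel
      apply Set.Subset.antisymm
      · rintro _ ⟨_, ⟨_, ⟨a, ha, rfl⟩, rfl⟩, b, hb, rfl⟩
        exact ⟨a + b, ⟨a, ⟨a, ha, rfl⟩, b, hb, rfl⟩, key a b hb⟩
      · rintro _ ⟨_, ⟨_, ⟨a, ha, rfl⟩, b, hb, rfl⟩, rfl⟩
        exact ⟨_, ⟨_, ⟨a, ha, rfl⟩, rfl⟩, b, hb, (key a b hb).symm⟩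
    rw [this, h.refl _ _ ((img_CC hK).add hBc)]
  flat := by
    intro u c K hK hu hc
    refine h.flat (u : V) c _ ((img_CC hK).add hBc) (by simpa using hu) ?_
    rintro _ ⟨_, ⟨a, ha, rfl⟩, b, hb, rfl⟩
    have := hc a ha
    simp only [inner_add_right, hB b hb u u.2, add_zero]
    simpa using this
  cont := by
    intro K hK hanti
    have : ((↑) : E → V) '' (⋂ i, K i) + B = ⋂ i, (((↑) : E → V) '' (K i) + B) := by
      apply Set.Subset.antisymm
      · rintro _ ⟨_, ⟨a, ha, rfl⟩, b, hb, rfl⟩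
        refine Set.mem_iInter.2 fun i => ⟨a, ⟨a, Set.mem_iInter.1 ha i, rfl⟩, b, hb, rfl⟩
      · intro x hx
        rw [Set.mem_iInter] at hx
        obtain ⟨_, ⟨a, ha, rfl⟩, b, hb, rfl⟩ := hx 0
        refine ⟨a, ⟨a, Set.mem_iInter.2 fun i => ?_, rfl⟩, b, hb, rfl⟩
        obtain ⟨_, ⟨a', ha', rfl⟩, b', hb', hab⟩ := hx i
        obtain ⟨rfl, rfl⟩ := ortho_unique hB hb' hb hab
        exact ha'
    rw [this]
    exact h.cont _ (fun i => (img_CC (hK i)).add hBc)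
      (fun i j hij => Set.add_subset_add_right (Set.image_mono (hanti hij)))

lemma cube_CC [FiniteDimensional ℝ V] {ι : Type} [Fintype ι] {b : ι → V} (hb : Orthonormal ℝ b)
    (hcard : Fintype.card ι = finrank ℝ V) : CC {x : V | ∀ i, inner ℝ (b i) x ∈ Set.Icc (0:ℝ) 1} := by
  have heq : {x : V | ∀ i, inner ℝ (b i) x ∈ Set.Icc (0:ℝ) 1} =
      ⋂ i, ({x | 0 ≤ inner ℝ (b i) x} ∩ {x | inner ℝ (b i) x ≤ 1}) := by
    ext x; simp [Set.mem_iInter]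
  constructor
  · apply Metric.isCompact_of_isClosed_isBounded
    · rw [heq]
      exact isClosed_iInter fun i => (closed_ge _ _).inter (closed_le _ _)
    · have hs : ⊤ ≤ Submodule.span ℝ (Set.range b) :=
        (hb.linearIndependent.span_eq_top_of_card_eq_finrank' hcard).ge
      let B := OrthonormalBasis.mk hb hs
      rw [isBounded_iff_forall_norm_le]
      refine ⟨Fintype.card ι + 1, fun x hx => ?_⟩
      have h1 := B.sum_sq_norm_inner_right x
      have h2 : ∑ i, ‖inner ℝ (B i) x‖ ^ 2 ≤ ∑ i : ι, (1 : ℝ) := by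
        refine Finset.sum_le_sum fun i _ => ?_
        have := hx i
        simp only [B, OrthonormalBasis.coe_mk, Real.norm_eq_abs, sq_abs]
        have h3 := this.1
        have h4 := this.2
        nlinarith
      rw [h1] at h2
      simp at h2
      have : (0:ℝ) ≤ Fintype.card ι := by positivity
      nlinarith [norm_nonneg x]
  · rw [heq]
    exact convex_iInter fun i => (convex_ge _ _).inter (convex_le _ _)

def Van (V : Type) [NormedAddCommGroup V] [InnerProductSpace ℝ V] : Prop :=
  ∀ σ : Set V → ℝ, Good σ → Cubes σ → ∀ K, CC K → σ K = 0

def Seg (e : V) (h : ℝ) : Set V := (fun t : ℝ => t • e) '' Set.Icc 0 h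

lemma Seg_CC (e : V) (h : ℝ) : CC (Seg e h) :=
  ⟨isCompact_Icc.image (by fun_prop),
    (convex_Icc 0 h).linear_image (LinearMap.toSpanSingleton ℝ V e)⟩

lemma Seg_smul (e : V) {h : ℝ} (hh : 0 ≤ h) : Seg e h = h • Seg e 1 := by
  apply Set.Subset.antisymm
  · rintro _ ⟨t, ht, rfl⟩
    rcases hh.eq_or_lt with rfl | hp
    · have : t = 0 := le_antisymm ht.2 ht.1
      subst this
      exact ⟨0, ⟨0, by simp, by simp⟩, by simp⟩
    · refine ⟨(t / h) • e, ⟨t / h, ⟨div_nonneg ht.1 hh, (div_le_one hp).2 ht.2⟩, rfl⟩, ?_⟩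
      simp only [smul_smul]; congr 1; field_simp
  · rintro _ ⟨_, ⟨t, ht, rfl⟩, rfl⟩
    exact ⟨h * t, ⟨mul_nonneg hh ht.1, by nlinarith [ht.2]⟩, by simp [smul_smul]⟩

lemma zero_mem_Seg (e : V) {h : ℝ} (hh : 0 ≤ h) : (0 : V) ∈ Seg e h := ⟨0, ⟨le_rfl, hh⟩, by simp⟩

lemma cyl [FiniteDimensional ℝ V] {σ : Set V → ℝ} (hσ : Good σ) (hC : Cubes σ) {e : V}
    (he : ‖e‖ = 1) (hV : Van ((ℝ ∙ e)ᗮ : Submodule ℝ V)) {h : ℝ} (hh : 0 ≤ h)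
    {D : Set ((ℝ ∙ e)ᗮ : Submodule ℝ V)} (hD : CC D) :
    σ (((↑) : ((ℝ ∙ e)ᗮ : Submodule ℝ V) → V) '' D + Seg e h) = 0 := by
  have he0 : e ≠ 0 := by rintro rfl; simp at he
  have hee : inner ℝ e e = (1:ℝ) := by rw [real_inner_self_eq_norm_sq, he]; norm_num
  have hB : ∀ h : ℝ, ∀ y ∈ Seg e h, ∀ x ∈ ((ℝ ∙ e)ᗮ : Submodule ℝ V), inner ℝ x y = 0 := by
    rintro h _ ⟨t, _, rfl⟩ x hx
    simp only [inner_smul_right, mem_perp' ⟨x, hx⟩, mul_zero]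
  refine hV _ (transfer hσ _ (Seg_CC e h) (hB h)) ?_ D hD
  intro ι _ b hb hcard
  set Q := {x : ((ℝ ∙ e)ᗮ : Submodule ℝ V) | ∀ i, inner ℝ (b i) x ∈ Set.Icc (0:ℝ) 1} with hQ
  have hQc : CC Q := cube_CC hb hcard
  set f : ℝ → ℝ := fun h => σ (((↑) : ((ℝ ∙ e)ᗮ : Submodule ℝ V) → V) '' Q + Seg e h) with hf
  have hin : ∀ (a : ((ℝ ∙ e)ᗮ : Submodule ℝ V)) (t : ℝ), inner ℝ e ((a : V) + t • e) = t := by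
    intro a t
    rw [inner_add_right, mem_perp, inner_smul_right, hee]; ring
  have hadd : ∀ s t, 0 ≤ s → 0 ≤ t → f (s + t) = f s + f t := by
    intro s t hs ht
    simp only [hf]
    rw [hσ.simp.cut e s _ ((img_CC hQc).add (Seg_CC e (s + t))) he0,
      ← hσ.trans (s • e) _ ((img_CC hQc).add (Seg_CC e t))]
    congr 2
    · ext x
      constructor
      · rintro ⟨⟨_, ⟨a, ha, rfl⟩, _, ⟨r, hr, rfl⟩, rfl⟩, hx⟩
        have hx : inner ℝ e ((a : V) + r • e) ≤ s := hx
        rw [hin] at hx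
        exact ⟨_, ⟨a, ha, rfl⟩, _, ⟨r, ⟨hr.1, hx⟩, rfl⟩, rfl⟩
      · rintro ⟨_, ⟨a, ha, rfl⟩, _, ⟨r, hr, rfl⟩, rfl⟩
        refine ⟨⟨_, ⟨a, ha, rfl⟩, _, ⟨r, ⟨hr.1, by linarith [hr.2]⟩, rfl⟩, rfl⟩, ?_⟩
        show inner ℝ e ((a : V) + r • e) ≤ s
        rw [hin]; exact hr.2
    · ext x
      constructor
      · rintro ⟨⟨_, ⟨a, ha, rfl⟩, _, ⟨r, hr, rfl⟩, rfl⟩, hx⟩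
        have hx : s ≤ inner ℝ e ((a : V) + r • e) := hx
        rw [hin] at hx
        refine ⟨_, rfl, _, ⟨_, ⟨a, ha, rfl⟩, _, ⟨r - s, ⟨by linarith, by linarith [hr.2]⟩, rfl⟩, rfl⟩, ?_⟩
        simp only [sub_smul]; abel
      · rintro ⟨_, rfl, _, ⟨_, ⟨a, ha, rfl⟩, _, ⟨r, hr, rfl⟩, rfl⟩, rfl⟩
        have h1 : s • e + ((a : V) + r • e) = a + (s + r) • e := by rw [add_smul]; abel
        refine ⟨⟨_, ⟨a, ha, rfl⟩, _, ⟨s + r, ⟨by linarith [hr.1], by linarith [hr.2]⟩, rfl⟩, ?_⟩, ?_⟩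
        · exact h1.symm
        · show s ≤ inner ℝ e (s • e + ((a : V) + r • e))
          rw [h1, hin]; linarith [hr.1]
  have hcont : ∀ t, 0 ≤ t → ∀ u : ℕ → ℝ, Antitone u → Tendsto u atTop (𝓝 t) →
      Tendsto (fun i => f (u i)) atTop (𝓝 (f t)) := by
    intro t ht u hu hut
    have h1 := smul_close hσ.cont (Seg_CC e 1) (img_CC hQc) (zero_mem_Seg e zero_le_one) ht hu hut
    have h2 : ∀ t, 0 ≤ t → f t = σ (t • Seg e 1 + ((↑) : ((ℝ ∙ e)ᗮ : Submodule ℝ V) → V) '' Q) := by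
      intro t ht
      simp only [hf]
      rw [Seg_smul e ht, add_comm]
    rw [h2 t ht]
    refine h1.congr fun i => (h2 _ (ht.trans (hu.le_of_tendsto hut i))).symm
  have hlin := additive_lin f hadd hcont h hh
  have h1 : f 1 = 0 := by
    have hO : Orthonormal ℝ (fun o : Option ι => o.elim e (fun i => (b i : V))) := by
      constructor
      · rintro (_ | i)
        · exact he
        · exact hb.1 i
      · rintro (_ | i) (_ | j) hij
        · exact absurd rfl hij
        · exact mem_perp _
        · exact mem_perp' _
        · exact hb.2 (fun h => hij (by rw [h]))
    have := hC (Option ι) _ hO (by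
      rw [Fintype.card_option, hcard]
      have h1 := Submodule.finrank_add_finrank_orthogonal (ℝ ∙ e)
      rw [finrank_span_singleton he0] at h1
      omega)
    rw [← this]
    simp only [hf]
    congr 1
    ext x
    constructor
    · rintro ⟨_, ⟨a, ha, rfl⟩, _, ⟨r, hr, rfl⟩, rfl⟩
      rintro (_ | i)
      · show inner ℝ e ((a : V) + r • e) ∈ _
        rw [hin]; exact hr
      · show inner ℝ (b i : V) ((a : V) + r • e) ∈ _
        rw [inner_add_right, inner_smul_right, mem_perp', mul_zero, add_zero]
        exact ha i
    · intro hx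
      have hp : x - inner ℝ e x • e ∈ ((ℝ ∙ e)ᗮ : Submodule ℝ V) := by
        rw [Submodule.mem_orthogonal_singleton_iff_inner_right, inner_sub_right, inner_smul_right,
          hee]; ring
      refine ⟨_, ⟨⟨_, hp⟩, ?_, rfl⟩, _, ⟨inner ℝ e x, hx none, rfl⟩, by simp⟩
      intro i
      have := hx (some i)
      show inner ℝ (b i : V) (x - inner ℝ e x • e) ∈ _
      rw [inner_sub_right, inner_smul_right, mem_perp', mul_zero, sub_zero]
      exact this
  show f h = 0
  rw [hlin, h1, mul_zero]

lemma cyl' [FiniteDimensional ℝ V] {σ : Set V → ℝ} (hσ : Good σ) (hC : Cubes σ) {e : V}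
    (he : ‖e‖ = 1) (hV : Van ((ℝ ∙ e)ᗮ : Submodule ℝ V)) {h : ℝ} (hh : 0 ≤ h)
    {D : Set V} (hD : CC D) (hDe : ∀ x ∈ D, inner ℝ e x = 0) : σ (D + Seg e h) = 0 := by
  have h1 : ((↑) : ((ℝ ∙ e)ᗮ : Submodule ℝ V) → V) '' (((↑) : ((ℝ ∙ e)ᗮ : Submodule ℝ V) → V) ⁻¹' D) = D := by
    apply Set.image_preimage_eq_of_subset
    intro x hx
    exact ⟨⟨x, Submodule.mem_orthogonal_singleton_iff_inner_right.2 (hDe x hx)⟩, rfl⟩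
  rw [← h1]
  refine cyl hσ hC he hV hh ⟨?_, hD.2.linear_preimage (Submodule.subtype _)⟩
  exact (Submodule.closed_of_finiteDimensional _).isClosedEmbedding_subtypeVal.isCompact_preimage hD.1

lemma prod_zero [FiniteDimensional ℝ V] {σ : Set V → ℝ} (hσ : Good σ)
    (hcyl : ∀ e : V, ‖e‖ = 1 → ∀ D, CC D → (∀ x ∈ D, inner ℝ e x = 0) → σ (D + Seg e 1) = 0)
    (E : Submodule ℝ V) (hE : 0 < finrank ℝ E) (hV : Van E) {A B : Set V} (hA : CC A) (hBc : CC B)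
    (hAE : A ⊆ E) (hB : ∀ y ∈ B, ∀ x ∈ E, inner ℝ x y = 0) : σ (A + B) = 0 := by
  have h1 : ((↑) : E → V) '' (((↑) : E → V) ⁻¹' A) = A := by
    apply Set.image_preimage_eq_of_subset
    intro x hx
    exact ⟨⟨x, hAE hx⟩, rfl⟩
  rw [← h1]
  refine hV _ (transfer hσ E hBc hB) ?_ _ ⟨?_, hA.2.linear_preimage (Submodule.subtype _)⟩
  swap
  · exact (Submodule.closed_of_finiteDimensional _).isClosedEmbedding_subtypeVal.isCompact_preimage hA.1
  intro ι _ b hb hcard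
  have hQc := cube_CC hb hcard
  set Q := {x : E | ∀ i, inner ℝ (b i) x ∈ Set.Icc (0:ℝ) 1} with hQ
  have : Nonempty ι := Fintype.card_pos_iff.1 (by omega)
  obtain ⟨i0⟩ := this
  have he : ‖(b i0 : V)‖ = 1 := hb.1 i0
  have hee : inner ℝ (b i0) (b i0) = (1:ℝ) := by
    rw [real_inner_self_eq_norm_sq, hb.1 i0]; norm_num
  have hne : ∀ i, i ≠ i0 → inner ℝ (b i) (b i0) = 0 := fun i hi => hb.2 hi
  have hQB := (img_CC hQc).add hBc
  have hh := hcyl (b i0) he ((((↑) : E → V) '' Q + B) ∩ {x | inner ℝ (b i0 : V) x = 0})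
    (hQB.inter (isClosed_eq (by fun_prop) continuous_const)
      (convex_hyperplane (innerSL ℝ (b i0 : V)).isLinear 0)) (fun x hx => hx.2)
  rw [← hh]
  show σ (((↑) : E → V) '' Q + B) = _
  congr 1
  have hin : ∀ (a : E) (y : V), y ∈ B → inner ℝ (b i0 : V) ((a : V) + y) = inner ℝ (b i0) a := by
    intro a y hy
    rw [inner_add_right, hB y hy _ (b i0).2, add_zero, Submodule.coe_inner]
  apply Set.Subset.antisymm
  · rintro _ ⟨_, ⟨a, ha, rfl⟩, y, hy, rfl⟩
    refine ⟨((a - inner ℝ (b i0) a • b i0 : E) : V) + y, ⟨⟨_, ⟨_, ?_, rfl⟩, y, hy, rfl⟩, ?_⟩, _,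
      ⟨inner ℝ (b i0) a, ha i0, rfl⟩, ?_⟩
    · intro i
      rw [inner_sub_right, inner_smul_right]
      by_cases hi : i = i0
      · subst hi; rw [hee]; simp
      · rw [hne i hi, mul_zero, sub_zero]; exact ha i
    · show inner ℝ (b i0 : V) _ = 0
      rw [hin _ _ hy, inner_sub_right, inner_smul_right, hee]; ring
    · push_cast; abel
  · rintro _ ⟨_, ⟨⟨_, ⟨a, ha, rfl⟩, y, hy, rfl⟩, h0⟩, _, ⟨t, ht, rfl⟩, rfl⟩
    have h0 : inner ℝ (b i0 : V) ((a : V) + y) = 0 := h0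
    rw [hin _ _ hy] at h0
    refine ⟨_, ⟨a + t • b i0, ?_, rfl⟩, y, hy, ?_⟩
    · intro i
      rw [inner_add_right, inner_smul_right]
      by_cases hi : i = i0
      · subst hi; rw [hee, h0]; simpa using ht
      · rw [hne i hi, mul_zero, add_zero]; exact ha i
    · push_cast; abel

end
end VT

namespace VT
open scoped Pointwise
open Module

section
variable {V : Type} [NormedAddCommGroup V] [InnerProductSpace ℝ V]

lemma inner_span {S : Set V} {y : V} (h : ∀ s ∈ S, inner ℝ s y = 0) {x : V}
    (hx : x ∈ Submodule.span ℝ S) : inner ℝ x y = 0 := by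
  have : Submodule.span ℝ S ≤ (ℝ ∙ y)ᗮ := by
    rw [Submodule.span_le]
    intro s hs
    exact Submodule.mem_orthogonal_singleton_iff_inner_left.2 (h s hs)
  exact Submodule.mem_orthogonal_singleton_iff_inner_left.1 (this hx)

lemma add_sing_zero (A : Set V) : A + {0} = A := by simp

/-- span of the first vectors -/
def Sp (w : ℕ → V) (i : ℕ) : Submodule ℝ V := Submodule.span ℝ (w '' Set.Iio i)

lemma Sp_finrank (w : ℕ → V) (i : ℕ) : finrank ℝ (Sp w i) ≤ i := by
  classical
  have h := finrank_span_finset_le_card (R := ℝ) ((Finset.range i).image w)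
  have h2 : ((((Finset.range i).image w : Finset V)) : Set V) = w '' Set.Iio i := by
    ext; simp
  rw [h2] at h
  exact h.trans (Finset.card_image_le.trans (by simp))

lemma ev_mem_Sp (w : ℕ → V) (i : ℕ) (x : ℕ → ℝ) : ev w i x ∈ Sp w i := by
  rw [ev_apply]
  refine Submodule.sum_mem _ fun j hj => Submodule.smul_mem _ _ (Submodule.subset_span ?_)
  exact ⟨j, by simpa using hj, rfl⟩

lemma T_sub_Sp (w : ℕ → V) (i : ℕ) (m : ℝ) : T w i m ⊆ Sp w i := by
  rintro _ ⟨x, _, rfl⟩; exact ev_mem_Sp w i x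

lemma T_flat [FiniteDimensional ℝ V] {σ : Set V → ℝ} (hσ : Good σ) (w : ℕ → V) {i : ℕ}
    (hi : i < finrank ℝ V) (m : ℝ) : σ (T w i m) = 0 := by
  have h1 : (Sp w i)ᗮ ≠ ⊥ := by
    intro h
    rw [Submodule.orthogonal_eq_bot_iff] at h
    have := Sp_finrank w i
    rw [h, finrank_top] at this
    omega
  obtain ⟨u, hu, hu0⟩ := Submodule.exists_mem_ne_zero_of_ne_bot h1
  refine hσ.flat u 0 _ (T_CC w i m) hu0 fun x hx => ?_
  exact Submodule.inner_left_of_mem_orthogonal (T_sub_Sp w i m hx) hu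

lemma ortho_add [FiniteDimensional ℝ V] {σ : Set V → ℝ} (hσ : Good σ) (hn : 0 < finrank ℝ V)
    (hprod : ∀ (E : Submodule ℝ V), 0 < finrank ℝ E → finrank ℝ E < finrank ℝ V →
      ∀ A B : Set V, CC A → CC B → A ⊆ E → (∀ y ∈ B, ∀ x ∈ E, inner ℝ x y = 0) → σ (A + B) = 0)
    {w : ℕ → V} (hw : Ortho w (finrank ℝ V)) {r s : ℝ} (hr : 0 ≤ r) (hs : 0 ≤ s) :
    σ (T w (finrank ℝ V) (r + s)) = σ (T w (finrank ℝ V) r) + σ (T w (finrank ℝ V) s) := by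
  set n := finrank ℝ V with hndef
  have h := chain hσ w n (r + s) s (CC.sing 0) n
  simp only [add_sing_zero] at h
  rw [h, Uc_full w n hr hs, hσ.trans _ _ (T_CC w n r)]
  congr 1
  have hI : ∀ i < n, σ (ev w n '' (Uc (r + s) s i ∩ {x | x i = s})) = 0 := by
    intro i hi
    have hcc : CC (ev w n '' (Uc (r + s) s i ∩ {x | x i = s})) := by
      apply ev_CC
      · exact (Uc_compact _ _ _).inter_right (isClosed_eq (by fun_prop) (by fun_prop))
      · exact (Uc_convex _ _ _).inter
          (convex_hyperplane (LinearMap.proj i : (ℕ → ℝ) →ₗ[ℝ] ℝ).isLinear s)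
    refine hσ.flat (w i) (s * inner ℝ (w i) (w i)) _ hcc (hw.1 i hi) ?_
    rintro _ ⟨x, ⟨_, hx⟩, rfl⟩
    have hx : x i = s := hx
    rw [ev_apply, inner_sum, Finset.sum_eq_single i]
    · rw [inner_smul_right, hx]
    · intro j hj hji
      rw [inner_smul_right, hw.2 i hi j (by simpa using hj) (Ne.symm hji), mul_zero]
    · intro h; exact absurd (Finset.mem_range.2 hi) h
  rw [Finset.sum_eq_single 0]
  · rw [hI 0 hn, sub_zero, Uc_le, Uc_split w n 0 hn.le hr hs _ subset_rfl, T_dim_zero w hr]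
    simp [T]
  · intro i hi hi0
    have hi : i < n := by simpa using hi
    have hTc : CC (ev (fun j => w (i + j)) (n - i) '' Sq s) := ev_CC _ _ (Sq_compact s) (Sq_convex s)
    rw [hI i hi, sub_zero, Uc_le, Uc_split w n i hi.le hr hs _ subset_rfl,
      hσ.trans _ _ ((T_CC w i r).add hTc)]
    have h0 : w 0 ∈ Sp w i := Submodule.subset_span ⟨0, by simp; omega, rfl⟩
    refine hprod (Sp w i) ?_ ((Sp_finrank w i).trans_lt hi) _ _ (T_CC w i r) hTc (T_sub_Sp w i r) ?_
    · rw [Module.finrank_pos_iff]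
      refine ⟨⟨⟨w 0, h0⟩, 0, ?_⟩⟩
      intro h
      exact hw.1 0 hn (by simpa using congrArg Subtype.val h)
    · rintro _ ⟨x, _, rfl⟩ y hy
      refine inner_span ?_ hy
      rintro _ ⟨k, hk, rfl⟩
      have hk : k < i := hk
      rw [ev_apply, inner_sum]
      refine Finset.sum_eq_zero fun j hj => ?_
      have hj : j < n - i := by simpa using hj
      rw [inner_smul_right, hw.2 k (by omega) (i + j) (by omega) (by omega), mul_zero]
  · intro h; exact absurd (Finset.mem_range.2 hn) h

lemma smul_flat {t : ℝ} {K : Set V} {u : V} {c : ℝ} (h : ∀ x ∈ K, inner ℝ u x = c) :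
    ∀ x ∈ t • K, inner ℝ u x = t * c := by
  rintro _ ⟨x, hx, rfl⟩
  rw [inner_smul_right, h x hx]

lemma hom_of [FiniteDimensional ℝ V] {σ : Set V → ℝ} (hσ : Good σ)
    (hadd : ∀ w : ℕ → V, Ortho w (finrank ℝ V) → ∀ r s : ℝ, 0 ≤ r → 0 ≤ s →
      σ (T w (finrank ℝ V) (r + s)) = σ (T w (finrank ℝ V) r) + σ (T w (finrank ℝ V) s))
    {t : ℝ} (ht : 0 < t) {K : Set V} (hK : CC K) : σ (t • K) = t * σ K := by
  have hS : Simp (fun K => σ (t • K) - t * σ K) := by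
    refine ⟨?_, ?_, ?_⟩
    · simp [hσ.empty]
    · intro u c K hK hu hc
      rw [hσ.flat u c K hK hu hc, hσ.flat u _ (t • K) (hK.smul t) hu (smul_flat hc)]; simp
    · intro u c K hK hu
      rw [hσ.simp.cut u c K hK hu, hσ.simp.cut u (t * c) _ (hK.smul t) hu]
      have h1 : (t • K) ∩ {x | inner ℝ u x ≤ t * c} = t • (K ∩ {x | inner ℝ u x ≤ c}) := by
        rw [Set.smul_set_inter₀ ht.ne']
        congr 1
        ext x
        rw [Set.mem_smul_set_iff_inv_smul_mem₀ ht.ne']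
        show inner ℝ u x ≤ t * c ↔ inner ℝ u (t⁻¹ • x) ≤ c
        rw [inner_smul_right, inv_mul_le_iff₀ ht]
      have h2 : (t • K) ∩ {x | t * c ≤ inner ℝ u x} = t • (K ∩ {x | c ≤ inner ℝ u x}) := by
        rw [Set.smul_set_inter₀ ht.ne']
        congr 1
        ext x
        rw [Set.mem_smul_set_iff_inv_smul_mem₀ ht.ne']
        show t * c ≤ inner ℝ u x ↔ c ≤ inner ℝ u (t⁻¹ • x)
        rw [inner_smul_right, le_inv_mul_iff₀ ht]
      rw [h1, h2]; ring
  have := simp_zero hS ?_ ?_ hK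
  · linarith
  · intro K hK hanti
    have h1 : t • (⋂ i, K i) = ⋂ i, t • K i := by
      ext x
      simp only [Set.mem_smul_set_iff_inv_smul_mem₀ ht.ne', Set.mem_iInter]
    simp only [h1]
    exact (hσ.cont _ (fun i => (hK i).smul t) (fun i j hij => Set.smul_set_mono (hanti hij))).sub
      ((hσ.cont K hK hanti).const_mul t)
  · intro w hw
    have h1 := additive_lin (fun t => σ (T w (finrank ℝ V) t)) (hadd w hw) ?_ t ht.le
    · rw [← T_smul w _ ht.le, h1, sub_self]
    · intro t ht u hu hut
      have h1 := smul_close hσ.cont (T_CC w (finrank ℝ V) 1) (CC.sing 0)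
        (zero_mem_T w _ zero_le_one) ht hu hut
      simp only [add_sing_zero] at h1
      rw [T_smul w _ ht]
      refine h1.congr fun i => ?_
      rw [T_smul w _ (ht.trans (hu.le_of_tendsto hut i))]

lemma T_smul' (w : ℕ → V) (d : ℕ) {m : ℝ} (hm : 0 ≤ m) : T (fun j => m • w j) d 1 = T w d m := by
  rw [T_smul w d hm]
  unfold T
  ext x
  simp only [Set.mem_smul_set, Set.mem_image, exists_exists_and_eq_and]
  have : ∀ y, ev (fun j => m • w j) d y = m • ev w d y := by
    intro y
    rw [ev_apply, ev_apply, Finset.smul_sum]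
    refine Finset.sum_congr rfl fun j _ => ?_
    rw [smul_comm]
  simp only [this]

lemma T_add [FiniteDimensional ℝ V] {σ : Set V → ℝ} (hσ : Good σ)
    (hhom : ∀ t : ℝ, 0 < t → ∀ K : Set V, CC K → σ (t • K) = t * σ K) (d : ℕ) :
    d ≤ finrank ℝ V → ∀ (w : ℕ → V) (L : Set V), CC L → L.Nonempty →
      σ (T w d 1 + L) = σ (T w d 1) + σ L := by
  induction d using Nat.strong_induction_on with
  | _ d IH =>
  intro hd w
  have IH' : ∀ i < d, ∀ m : ℝ, 0 ≤ m → ∀ L : Set V, CC L → L.Nonempty → σ (T w i m + L) = σ L := by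
    intro i hi m hm L hL hL0
    have := IH i hi (by omega) (fun j => m • w j) L hL hL0
    rw [T_smul' w i hm, T_flat hσ w (by omega) m, zero_add] at this
    exact this
  have main : ∀ L : Set V, CC L → (0 : V) ∈ L → σ (T w d 1 + L) = σ (T w d 1) + σ L := by
    intro L hL hL0
    let c : ℝ := ∑ i ∈ Finset.range d,
      (σ (ev (fun j => w (i + j)) (d - i) '' Sq 1 + L)
        - σ (ev (fun j => w (i + j)) (d - i) '' (Sq 1 ∩ {z | z 0 = 1}) + L))
    have term : ∀ (m : ℝ), 0 ≤ m → ∀ i < d, ∀ S : Set (ℕ → ℝ), IsCompact S → Convex ℝ S →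
        S.Nonempty → S ⊆ Sq 1 →
        σ (ev w d '' (Uc (m + 1) 1 i ∩ {x | (fun j => x (i + j)) ∈ S}) + L) =
        σ (ev (fun j => w (i + j)) (d - i) '' S + L) := by
      intro m hm i hi S hS1 hS2 hS3 hS4
      have hc := (ev_CC (fun j => w (i + j)) (d - i) hS1 hS2).add hL
      rw [Uc_split w d i hi.le hm zero_le_one S hS4, add_assoc, add_assoc,
        hσ.trans _ _ ((T_CC w i m).add hc), IH' i hi m hm _ hc ((hS3.image _).add ⟨0, hL0⟩)]
    have step : ∀ m : ℝ, 0 ≤ m → σ (T w d (m + 1) + L) = σ (T w d m + L) + c := by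
      intro m hm
      rw [chain hσ w d (m + 1) 1 hL d, Uc_full w d hm zero_le_one, add_assoc,
        hσ.trans _ _ ((T_CC w d m).add hL)]
      congr 1
      refine Finset.sum_congr rfl fun i hi => ?_
      have hi : i < d := by simpa using hi
      rw [Uc_le, Uc_eq, term m hm i hi _ (Sq_compact 1) (Sq_convex 1) ⟨0, zero_mem_Sq zero_le_one⟩
        subset_rfl, term m hm i hi _ (Sqe_compact 1) (Sqe_convex 1) ⟨fun _ => 1, ⟨?_, ?_⟩, rfl⟩
        Set.inter_subset_left]
      · exact antitone_const
      · intro j; simp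
    have hp : ∀ m : ℕ, σ (T w d m + L) = σ L + m * c := by
      intro m
      induction m with
      | zero =>
        have : T w d ((0:ℕ):ℝ) = {0} := by
          rw [T_smul w d (by simp), Nat.cast_zero,
            Set.zero_smul_set ⟨0, zero_mem_T w d zero_le_one⟩]; rfl
        rw [this]; simp
      | succ m ih =>
        push_cast
        rw [step m (by positivity), ih]; ring
    have hlim := smul_close hσ.cont hL (T_CC w d 1) hL0 le_rfl
      (u := fun i : ℕ => 1 / ((i : ℝ) + 1)) ?_ tendsto_one_div_add_atTop_nhds_zero_nat
    swap
    · intro i j hij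
      exact Nat.one_div_le_one_div hij
    have hval : ∀ i : ℕ, σ ((1 / ((i : ℝ) + 1)) • L + T w d 1) = (1 / ((i : ℝ) + 1)) * σ L + c := by
      intro i
      have hi : (0:ℝ) < (i : ℝ) + 1 := by positivity
      have h1 := hhom ((i : ℝ) + 1) hi _ ((hL.smul (1 / ((i : ℝ) + 1))).add (T_CC w d 1))
      have h2 : ((i : ℝ) + 1) • ((1 / ((i : ℝ) + 1)) • L + T w d 1) = T w d ((i + 1 : ℕ) : ℝ) + L := by
        rw [smul_add, smul_smul, mul_one_div_cancel hi.ne', one_smul, ← T_smul w d hi.le, add_comm]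
        push_cast; rfl
      rw [h2, hp] at h1
      push_cast at h1
      field_simp
      linarith
    simp only [hval] at hlim
    have hlim2 : Tendsto (fun i : ℕ => (1 / ((i : ℝ) + 1)) * σ L + c) atTop (𝓝 (0 * σ L + c)) :=
      (tendsto_one_div_add_atTop_nhds_zero_nat.mul_const _).add_const _
    have h3 := tendsto_nhds_unique hlim hlim2
    rw [Set.zero_smul_set ⟨0, hL0⟩, zero_add] at h3
    have h4 := hp 1
    rw [Nat.cast_one] at h4
    rw [h4, h3]; ring
  intro L hL ⟨l, hl⟩
  have h1 : L = {l} + ({-l} + L) := by rw [← add_assoc]; simp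
  have hc : CC ({-l} + L) := (CC.sing _).add hL
  have h2 := main ({-l} + L) hc ⟨-l, rfl, l, hl, by simp⟩
  rw [hσ.trans _ _ hL] at h2
  rw [← h2]
  conv_lhs => rw [h1, add_left_comm]
  rw [hσ.trans _ _ ((T_CC w d 1).add hc)]

end
end VT

namespace VT
open scoped Pointwise
open Module

section
variable {V : Type} [NormedAddCommGroup V] [InnerProductSpace ℝ V]

lemma rf_add (u x y : V) : rf u (x + y) = rf u x + rf u y := by
  simp only [rf, inner_add_right, mul_add, add_div, add_smul]; abel

lemma rf_rf (u x : V) : rf u (rf u x) = x := by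
  by_cases hu : u = 0
  · simp [rf, hu]
  · have : inner ℝ u u ≠ (0:ℝ) := by simpa using hu
    simp only [rf, inner_sub_right, inner_smul_right]
    rw [sub_sub, ← add_smul]
    have h2 : 2 * inner ℝ u x / inner ℝ u u
      + 2 * (inner ℝ u x - 2 * inner ℝ u x / inner ℝ u u * inner ℝ u u) / inner ℝ u u = (0:ℝ) := by
      field_simp; ring
    rw [h2]; simp

lemma rf_inner (u x y : V) : inner ℝ (rf u x) y = inner ℝ x (rf u y) := by
  simp only [rf, inner_sub_right, inner_sub_left, inner_smul_right, inner_smul_left,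
    RCLike.conj_to_real]
  rw [real_inner_comm u x]; ring

lemma rf_norm (u x : V) : ‖rf u x‖ = ‖x‖ := by
  have : ‖rf u x‖ ^ 2 = ‖x‖ ^ 2 := by
    rw [← real_inner_self_eq_norm_sq, ← real_inner_self_eq_norm_sq, rf_inner, rf_rf]
  exact (sq_eq_sq₀ (norm_nonneg _) (norm_nonneg _)).1 this

lemma rf_map (u v : V) (h : ‖u‖ = ‖v‖) : rf (u - v) u = v := by
  by_cases huv : u - v = 0
  · rw [huv]; simp [rf]; exact sub_eq_zero.1 huv
  · have h0 : inner ℝ (u - v) (u - v) ≠ (0:ℝ) := by simpa using huv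
    have h1 : 2 * inner ℝ (u - v) u = inner ℝ (u - v) (u - v) := by
      simp only [inner_sub_left, inner_sub_right, real_inner_self_eq_norm_sq, h,
        real_inner_comm u v]
      ring
    simp only [rf]
    rw [h1, div_self h0]; simp

/-- reflection as a linear map -/
def rfL (u : V) : V →ₗ[ℝ] V where
  toFun := rf u
  map_add' := rf_add u
  map_smul' := by
    intro c x
    simp only [rf, inner_smul_right, smul_sub, smul_smul, RingHom.id_apply]
    congr 2; ring

lemma rf_cont (u : V) : Continuous (rf u) := by unfold rf; fun_prop

lemma rf_CC (u : V) {K : Set V} (hK : CC K) : CC (rf u '' K) :=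
  ⟨hK.1.image (rf_cont u), hK.2.linear_image (rfL u)⟩

lemma rf_img_img (u : V) (K : Set V) : rf u '' (rf u '' K) = K := by
  rw [Set.image_image]; simp [rf_rf]

lemma rf_img_add (u : V) (K L : Set V) : rf u '' (K + L) = rf u '' K + rf u '' L :=
  Set.image_add (rfL u)

def Nice (σ : Set V → ℝ) (a : ℝ) (M : Set V) : Prop :=
  CC M ∧ M.Nonempty ∧ ∀ L, CC L → L.Nonempty → σ (M + L) = a + σ L

lemma Nice.rf {σ : Set V → ℝ} (hσ : Good σ) {a : ℝ} {M : Set V} (h : Nice σ a M) (u : V) :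
    Nice σ a (rf u '' M) := by
  refine ⟨rf_CC u h.1, h.2.1.image _, fun L hL hL0 => ?_⟩
  have : VT.rf u '' M + L = VT.rf u '' (M + VT.rf u '' L) := by
    rw [rf_img_add, rf_img_img]
  rw [this, hσ.refl _ _ (h.1.add (rf_CC u hL)), h.2.2 _ (rf_CC u hL) (hL0.image _), hσ.refl _ _ hL]

lemma Nice.add {σ : Set V → ℝ} {a b : ℝ} {M N : Set V} (h : Nice σ a M) (h' : Nice σ b N) :
    Nice σ (a + b) (M + N) := by
  refine ⟨h.1.add h'.1, h.2.1.add h'.2.1, fun L hL hL0 => ?_⟩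
  rw [add_assoc, h.2.2 _ (h'.1.add hL) (h'.2.1.add hL0), h'.2.2 L hL hL0]; ring

lemma Nice.zero {σ : Set V → ℝ} : Nice σ 0 (0 : Set V) :=
  ⟨CC.sing 0, ⟨0, rfl⟩, fun L _ _ => by simp⟩

lemma Nice.sum {σ : Set V → ℝ} {ι : Type} (F : Finset ι) {a : ι → ℝ} {M : ι → Set V}
    (h : ∀ i ∈ F, Nice σ (a i) (M i)) : Nice σ (∑ i ∈ F, a i) (∑ i ∈ F, M i) := by
  classical
  induction F using Finset.induction_on with
  | empty => simpa using Nice.zero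
  | insert i F hi ih =>
    rw [Finset.sum_insert hi, Finset.sum_insert hi]
    exact (h i (by simp)).add (ih fun j hj => h j (by simp [hj]))

lemma Nice.smul {σ : Set V → ℝ} (hhom : ∀ t : ℝ, 0 < t → ∀ K : Set V, CC K → σ (t • K) = t * σ K)
    {a : ℝ} {M : Set V} (h : Nice σ a M) {t : ℝ} (ht : 0 < t) : Nice σ (t * a) (t • M) := by
  refine ⟨h.1.smul t, h.2.1.smul_set, fun L hL hL0 => ?_⟩
  have : t • M + L = t • (M + t⁻¹ • L) := by
    rw [smul_add, smul_smul, mul_inv_cancel₀ ht.ne', one_smul]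
  rw [this, hhom t ht _ (h.1.add (hL.smul _)), h.2.2 _ (hL.smul _) hL0.smul_set,
    hhom _ (inv_pos.2 ht) _ hL]
  field_simp

lemma improve {σ : Set V → ℝ} (hσ : Good σ)
    (hhom : ∀ t : ℝ, 0 < t → ∀ K : Set V, CC K → σ (t • K) = t * σ K)
    {a : ℝ} {M : Set V} (h : Nice σ a M) (hball : Metric.closedBall 0 1 ⊆ M)
    {R ε : ℝ} (hR : 1 ≤ R) (hε : 0 < ε) (hε1 : ε ≤ 1) (F : Finset V) (hF : F.Nonempty)
    (hF1 : ∀ v ∈ F, ‖v‖ = 1) (hF2 : ∀ x : V, ‖x‖ = 1 → ∃ v ∈ F, ‖x - v‖ ≤ ε / (2 * (R + 1)))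
    (hM : M ⊆ Metric.closedBall 0 (R + ε / (4 * F.card))) {u : V} (hu : ‖u‖ = 1)
    (hMu : ∀ x ∈ M, inner ℝ u x ≤ R - ε) :
    ∃ M', Nice σ a M' ∧ Metric.closedBall 0 1 ⊆ M' ∧
      M' ⊆ Metric.closedBall 0 (R - ε / (4 * F.card)) := by
  classical
  have hm : (1:ℝ) ≤ F.card := by exact_mod_cast hF.card_pos
  have hm0 : (0:ℝ) < F.card := by linarith
  have hq : 0 < ε / (4 * F.card) := by positivity
  have hq1 : ε / (4 * F.card) ≤ 1 := by
    rw [div_le_one (by positivity)]; linarith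
  refine ⟨(1 / (F.card : ℝ)) • ∑ v ∈ F, rf (u - v) '' M, ?_, ?_, ?_⟩
  · have h1 := (Nice.sum F (fun v _ => h.rf hσ (u - v))).smul hhom (one_div_pos.2 hm0)
    rw [Finset.sum_const, nsmul_eq_mul] at h1
    convert h1 using 1
    field_simp
  · intro x hx
    rw [Set.mem_smul_set_iff_inv_smul_mem₀ (by positivity), Set.mem_finsetSum]
    refine ⟨fun _ => x, fun {v} hv => ⟨rf (u - v) x, hball ?_, rf_rf _ _⟩, ?_⟩
    · simpa [rf_norm] using hx
    · rw [Finset.sum_const, ← Nat.cast_smul_eq_nsmul ℝ]; simp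
  · rintro _ ⟨_, hy, rfl⟩
    rw [Set.mem_finsetSum] at hy
    obtain ⟨g, hg, rfl⟩ := hy
    simp only [mem_closedBall_zero_iff]
    set z := (1 / (F.card : ℝ)) • ∑ v ∈ F, g v with hz
    by_cases hz0 : z = 0
    · rw [hz0, norm_zero]; linarith
    have hzn : 0 < ‖z‖ := norm_pos_iff.2 hz0
    set v := ‖z‖⁻¹ • z with hv
    have hv1 : ‖v‖ = 1 := by rw [hv, norm_smul, norm_inv, norm_norm, inv_mul_cancel₀ hzn.ne']
    have hvz : inner ℝ v z = ‖z‖ := by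
      rw [hv, inner_smul_left, real_inner_self_eq_norm_sq]; simp; field_simp
    obtain ⟨w, hw, hvw⟩ := hF2 v hv1
    have hgn : ∀ v ∈ F, ‖g v‖ ≤ R + ε / (4 * F.card) := by
      intro v hv
      obtain ⟨x, hx, hx2⟩ := hg hv
      rw [← hx2, rf_norm]
      simpa using hM hx
    have hgv : ∀ x ∈ F, inner ℝ v (g x) ≤ R + ε / (4 * F.card) := by
      intro x hx
      have := real_inner_le_norm v (g x)
      rw [hv1, one_mul] at this
      exact this.trans (hgn x hx)
    have hgw : inner ℝ v (g w) ≤ R - ε / 2 := by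
      have h1 : inner ℝ v (g w) = inner ℝ w (g w) + inner ℝ (v - w) (g w) := by
        rw [inner_sub_left]; ring
      have h2 : inner ℝ w (g w) ≤ R - ε := by
        obtain ⟨x, hx, hx2⟩ := hg hw
        rw [← hx2, ← rf_inner]
        have : rf (u - w) w = u := by
          have hr := rf_rf (u - w) u
          rwa [rf_map u w (by rw [hu, hF1 w hw])] at hr
        rw [this]; exact hMu x hx
      have h3 : inner ℝ (v - w) (g w) ≤ ε / 2 := by
        have h4 := real_inner_le_norm (v - w) (g w)
        have h5 : ‖v - w‖ * ‖g w‖ ≤ ε / (2 * (R + 1)) * (R + 1) :=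
          mul_le_mul hvw ((hgn w hw).trans (by linarith)) (norm_nonneg _) (by positivity)
        have h6 : ε / (2 * (R + 1)) * (R + 1) = ε / 2 := by
          have : R + 1 ≠ 0 := by linarith
          field_simp
        linarith
      linarith
    have hsum : ∑ x ∈ F, inner ℝ v (g x) ≤ F.card * (R + ε / (4 * F.card)) - (ε / 2) := by
      rw [← Finset.add_sum_erase F _ hw]
      have h1 : ∑ x ∈ F.erase w, inner ℝ v (g x) ≤ (F.erase w).card • (R + ε / (4 * F.card)) :=
        Finset.sum_le_card_nsmul _ _ _ fun x hx => hgv x (Finset.mem_of_mem_erase hx)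
      rw [Finset.card_erase_of_mem hw, nsmul_eq_mul, Nat.cast_sub hF.card_pos] at h1
      push_cast at h1
      nlinarith
    rw [← hvz, hz, inner_smul_right, inner_sum]
    calc _ ≤ 1 / (F.card : ℝ) * (F.card * (R + ε / (4 * F.card)) - (ε / 2)) := by gcongr
      _ = _ := by field_simp; ring

lemma round [FiniteDimensional ℝ V] [Nontrivial V] {σ : Set V → ℝ} (hσ : Good σ)
    (hhom : ∀ t : ℝ, 0 < t → ∀ K : Set V, CC K → σ (t • K) = t * σ K)
    {a : ℝ} {M0 : Set V} (h0 : Nice σ a M0) (hball0 : Metric.closedBall 0 1 ⊆ M0) :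
    ∃ R : ℝ, 1 ≤ R ∧ ∀ ε : ℝ, 0 < ε → ε ≤ 1 → ∃ M, Nice σ a M ∧
      Metric.closedBall 0 (R - ε) ⊆ M ∧ M ⊆ Metric.closedBall 0 (R + ε) := by
  obtain ⟨e, he⟩ := exists_norm_eq V zero_le_one
  set S : Set ℝ := {ρ | ∃ M, Nice σ a M ∧ Metric.closedBall 0 1 ⊆ M ∧ M ⊆ Metric.closedBall 0 ρ} with hS
  have hS1 : ∀ ρ ∈ S, 1 ≤ ρ := by
    rintro ρ ⟨M, _, h1, h2⟩
    have : e ∈ Metric.closedBall (0 : V) ρ := h2 (h1 (by simp [he]))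
    simpa [he] using this
  have hSb : BddBelow S := ⟨1, hS1⟩
  have hSn : S.Nonempty := by
    obtain ⟨C, hC⟩ := h0.1.1.isBounded.subset_closedBall 0
    exact ⟨C, M0, h0, hball0, hC⟩
  refine ⟨sInf S, le_csInf hSn hS1, fun ε hε hε1 => ?_⟩
  set R := sInf S with hRdef
  have hR : 1 ≤ R := le_csInf hSn hS1
  have : ProperSpace V := FiniteDimensional.proper_real V
  obtain ⟨t, ht1, ht2, ht3⟩ := (isCompact_sphere (0 : V) 1).finite_cover_balls
    (e := ε / (2 * (R + 1))) (by positivity)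
  set F := ht2.toFinset with hF
  have hF1 : ∀ v ∈ F, ‖v‖ = 1 := fun v hv => by
    simpa using ht1 (ht2.mem_toFinset.1 hv)
  have hF2 : ∀ x : V, ‖x‖ = 1 → ∃ v ∈ F, ‖x - v‖ ≤ ε / (2 * (R + 1)) := by
    intro x hx
    have := ht3 (show x ∈ Metric.sphere (0 : V) 1 by simpa using hx)
    simp only [Set.mem_iUnion] at this
    obtain ⟨v, hv, hxv⟩ := this
    refine ⟨v, ht2.mem_toFinset.2 hv, ?_⟩
    rw [← dist_eq_norm]
    exact (Metric.mem_ball.1 hxv).le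
  have hFn : F.Nonempty := by
    obtain ⟨v, hv, _⟩ := hF2 e he
    exact ⟨v, hv⟩
  have hm : (1:ℝ) ≤ F.card := by exact_mod_cast hFn.card_pos
  have hq : 0 < ε / (4 * F.card) := by positivity
  have hq1 : ε / (4 * F.card) ≤ ε := by
    rw [div_le_iff₀ (by positivity)]; nlinarith
  obtain ⟨ρ, ⟨M, hM1, hM2, hM3⟩, hρ⟩ := exists_lt_of_csInf_lt hSn
    (show sInf S < R + ε / (4 * F.card) by linarith)
  have hM4 := hM3.trans (Metric.closedBall_subset_closedBall hρ.le)
  refine ⟨M, hM1, ?_, hM4.trans (Metric.closedBall_subset_closedBall (by linarith))⟩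
  by_contra hnot
  rw [Set.not_subset] at hnot
  obtain ⟨x, hx, hxM⟩ := hnot
  obtain ⟨u, c, h1, h2⟩ := sep hM1.1 hxM
  have hc : 0 ≤ c := by simpa using h1 0 (hM2 (by simp))
  have hu : u ≠ 0 := by
    rintro rfl
    rw [inner_zero_left] at h2; linarith
  have hun : 0 < ‖u‖ := norm_pos_iff.2 hu
  obtain ⟨M', hM'1, hM'2, hM'3⟩ := improve hσ hhom hM1 hM2 hR hε hε1 F hFn hF1 hF2 hM4
    (u := ‖u‖⁻¹ • u) (by rw [norm_smul, norm_inv, norm_norm, inv_mul_cancel₀ hun.ne']) (by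
      intro y hy
      rw [inner_smul_left]
      simp only [map_inv₀, RCLike.conj_to_real]
      rw [inv_mul_le_iff₀ hun]
      have h3 := real_inner_le_norm u x
      have h4 : ‖x‖ ≤ R - ε := by simpa using hx
      nlinarith [h1 y hy])
  have := csInf_le hSb (show R - ε / (4 * F.card) ∈ S from ⟨M', hM'1, hM'2, hM'3⟩)
  linarith

lemma ball_sub {p q : ℝ} [FiniteDimensional ℝ V] (hq : 0 ≤ q) (hpq : q ≤ p) :
    Metric.closedBall (0 : V) p = Metric.closedBall 0 q + Metric.closedBall 0 (p - q) := by
  rw [closedBall_add_closedBall hq (by linarith)]; congr 1 <;> simp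

lemma smul_ball_sub {Z : Set V} (hZ : Metric.closedBall 0 1 ⊆ Z) {t : ℝ} (ht : 0 < t) :
    Metric.closedBall 0 t ⊆ t • Z := by
  intro x hx
  rw [Set.mem_smul_set_iff_inv_smul_mem₀ ht.ne']
  apply hZ
  have : ‖x‖ ≤ t := by simpa using hx
  simp only [mem_closedBall_zero_iff, norm_smul, norm_inv, Real.norm_eq_abs, abs_of_pos ht]
  rwa [inv_mul_le_iff₀ ht, mul_one]

lemma ball_val [FiniteDimensional ℝ V] [Nontrivial V] {σ : Set V → ℝ} (hσ : Good σ)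
    (hhom : ∀ t : ℝ, 0 < t → ∀ K : Set V, CC K → σ (t • K) = t * σ K)
    {Z : Set V} (hZ : Nice σ 0 Z) (hZb : Metric.closedBall 0 1 ⊆ Z)
    {a : ℝ} {M0 : Set V} (h0 : Nice σ a M0) (hball0 : Metric.closedBall 0 1 ⊆ M0) :
    ∃ R : ℝ, 1 ≤ R ∧ σ (Metric.closedBall 0 R) = a := by
  obtain ⟨R, hR, hM⟩ := round hσ hhom h0 hball0
  refine ⟨R, hR, ?_⟩
  set e : ℕ → ℝ := fun j => (1 / 2 : ℝ) ^ j with he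
  have he0 : ∀ j, 0 < e j := fun j => by positivity
  have he1 : ∀ j, e j ≤ 1 := fun j => pow_le_one₀ (by norm_num) (by norm_num)
  have hes : ∀ j, e (j + 1) = e j / 2 := fun j => by simp only [he, pow_succ]; ring
  have helim : Tendsto e atTop (𝓝 0) :=
    tendsto_pow_atTop_nhds_zero_of_lt_one (by norm_num) (by norm_num)
  choose M hM1 hM2 hM3 using fun j => hM (e j) (he0 j) (he1 j)
  obtain ⟨C, hC⟩ := hZ.1.1.isBounded.subset_closedBall 0
  have hZ0 : (0 : V) ∈ Z := hZb (by simp)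
  have hmono : ∀ s t : ℝ, 0 ≤ s → s ≤ t → s • Z ⊆ t • Z := by
    intro s t hs hst
    have : t • Z = s • Z + (t - s) • Z := by
      rw [← hZ.1.2.add_smul hs (by linarith)]; congr 1; ring
    rw [this]
    intro x hx
    exact ⟨x, hx, 0, ⟨0, hZ0, by simp⟩, by simp⟩
  have hlim := tendsto_of_close hσ.cont (K := fun j => M j + (4 * e j) • Z)
    (K0 := Metric.closedBall 0 R) (e := fun j => e j + 4 * e j * max C 0)
    (fun j => (hM1 j).1.add (hZ.1.smul _)) ?_ (CC.ball R) ?_ ?_ ?_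
  · have hz : σ ({0} : Set V) = 0 := by
      obtain ⟨u, hu⟩ := exists_ne (0 : V)
      exact hσ.flat u 0 _ (CC.sing 0) hu (by simp)
    have hZz : σ Z = 0 := by
      have := hZ.2.2 {0} (CC.sing 0) ⟨0, rfl⟩
      rw [add_sing_zero, hz] at this
      linarith
    have hval : ∀ j, σ (M j + (4 * e j) • Z) = a := by
      intro j
      have := he0 j
      rw [(hM1 j).2.2 _ (hZ.1.smul _) ⟨0, 0, hZ0, by simp⟩, hhom _ (by positivity) _ hZ.1, hZz]; simp
    simp only [hval] at hlim
    exact (tendsto_nhds_unique hlim tendsto_const_nhds)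
  · apply antitone_nat_of_succ_le
    intro j
    have h1 := he0 j
    have h2 := he1 j
    have h3 : M (j + 1) ⊆ M j + (3 / 2 * e j) • Z := by
      refine (hM3 (j + 1)).trans ?_
      rw [ball_sub (p := R + e (j + 1)) (q := R - e j) (by linarith) (by linarith [he0 (j + 1)])]
      refine Set.add_subset_add (hM2 j) ?_
      have : R + e (j + 1) - (R - e j) = 3 / 2 * e j := by rw [hes]; ring
      rw [this]
      exact smul_ball_sub hZb (by positivity)
    have h4 : (4 * e (j + 1)) • Z = (2 * e j) • Z := by rw [hes]; congr 1; ring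
    simp only [h4]
    refine (Set.add_subset_add_right h3).trans ?_
    rw [add_assoc, ← hZ.1.2.add_smul (by positivity) (by positivity)]
    exact Set.add_subset_add_left (hmono _ _ (by positivity) (by linarith))
  · intro j
    have h1 := he0 j
    have h2 := he1 j
    rw [ball_sub (p := R) (q := R - e j) (by linarith) (by linarith)]
    refine Set.add_subset_add (hM2 j) ?_
    rw [sub_sub_cancel]
    exact (smul_ball_sub hZb h1).trans (hmono _ _ h1.le (by linarith))
  · have := helim.add ((helim.const_mul 4).mul_const (max C 0))
    simpa using this
  · rintro j _ ⟨x, hx, _, ⟨y, hy, rfl⟩, rfl⟩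
    have h1 := he0 j
    have hx' := hM3 j hx
    rw [ball_sub (p := R + e j) (q := R) (by linarith) (by linarith)] at hx'
    obtain ⟨p, hp, q, hq, rfl⟩ := hx'
    refine ⟨p, hp, q + (4 * e j) • y, ?_, by simp only [add_assoc]⟩
    have h5 : ‖q‖ ≤ e j := by simpa using hq
    have h6 : ‖y‖ ≤ max C 0 := le_max_of_le_left (by simpa using hC hy)
    simp only [mem_closedBall_zero_iff]
    refine (norm_add_le _ _).trans (add_le_add h5 ?_)
    rw [norm_smul, Real.norm_eq_abs, abs_of_pos (by positivity)]
    gcongr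

end
end VT

namespace VT
open scoped Pointwise
open Module

section
variable {V : Type} [NormedAddCommGroup V] [InnerProductSpace ℝ V]

lemma Seg_eq_T (e : V) : Seg e 1 = T (fun _ => e) 1 1 := by
  apply Set.Subset.antisymm
  · rintro _ ⟨t, ht, rfl⟩
    exact ⟨fun _ => t, ⟨antitone_const, fun _ => ht⟩, by simp [ev_apply]⟩
  · rintro _ ⟨x, hx, rfl⟩
    exact ⟨x 0, hx.2 0, by simp [ev_apply]⟩

lemma exists_zonotope [FiniteDimensional ℝ V] {σ : Set V → ℝ}
    (hseg : ∀ e : V, ‖e‖ = 1 → Nice σ 0 (Seg e 1)) :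
    ∃ Z, Nice σ 0 Z ∧ Metric.closedBall 0 1 ⊆ Z := by
  let b := stdOrthonormalBasis ℝ V
  refine ⟨∑ i, (Seg (b i) 1 + Seg (-b i) 1), ?_, ?_⟩
  · have := Nice.sum (σ := σ) Finset.univ (a := fun _ => 0 + 0)
      (M := fun i => Seg (b i) 1 + Seg (-b i) 1)
      (fun i _ => (hseg (b i) (b.orthonormal.1 i)).add
        (hseg (-b i) (by rw [norm_neg]; exact b.orthonormal.1 i)))
    simpa using this
  · intro x hx
    have hx : ‖x‖ ≤ 1 := by simpa using hx
    rw [Set.mem_finsetSum]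
    refine ⟨fun i => inner ℝ (b i) x • b i, fun {i} _ => ?_, b.sum_repr' x⟩
    have h1 : |inner ℝ (b i) x| ≤ 1 := by
      have := abs_real_inner_le_norm (b i) x
      rw [b.orthonormal.1 i, one_mul] at this
      exact this.trans hx
    rw [abs_le] at h1
    refine ⟨_, ⟨max (inner ℝ (b i) x) 0, ⟨le_max_right _ _, max_le h1.2 zero_le_one⟩, rfl⟩, _,
      ⟨max (-inner ℝ (b i) x) 0, ⟨le_max_right _ _, max_le (by linarith) zero_le_one⟩, rfl⟩, ?_⟩
    simp only [smul_neg, ← sub_eq_add_neg, ← sub_smul]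
    congr 1
    rcases le_total (inner ℝ (b i) x) 0 with h | h
    · rw [max_eq_right h, max_eq_left (by linarith)]; ring
    · rw [max_eq_left h, max_eq_right (by linarith)]; ring

end

theorem van (n : ℕ) : ∀ (V : Type) [NormedAddCommGroup V] [InnerProductSpace ℝ V]
    [FiniteDimensional ℝ V], finrank ℝ V = n → Van V := by
  induction n using Nat.strong_induction_on with
  | _ n IH =>
  intro V _ _ _ hn σ hσ hC
  rcases Nat.eq_zero_or_pos n with h0 | hpos
  · subst h0
    have hsub : Subsingleton V := finrank_zero_iff.1 hn
    intro K hK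
    rcases K.eq_empty_or_nonempty with rfl | ⟨x, hx⟩
    · exact hσ.empty
    · have h1 := hC Empty (fun i => i.elim) ⟨fun i => i.elim, fun i => i.elim⟩ (by simp [hn])
      rw [← h1]
      congr 1
      ext y
      rw [Subsingleton.elim y x]
      simp [hx]
  have hnt : Nontrivial V := nontrivial_of_finrank_pos (R := ℝ) (by omega)
  have hcyl : ∀ e : V, ‖e‖ = 1 → ∀ D, CC D → (∀ x ∈ D, inner ℝ e x = 0) → σ (D + Seg e 1) = 0 := by
    intro e he D hD hDe
    have he0 : e ≠ 0 := by rintro rfl; simp at he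
    refine cyl' hσ hC he ?_ zero_le_one hD hDe
    have h1 := Submodule.finrank_add_finrank_orthogonal (ℝ ∙ e)
    rw [finrank_span_singleton he0] at h1
    exact IH (n - 1) (by omega) _ (by omega)
  have hprod : ∀ (E : Submodule ℝ V), 0 < finrank ℝ E → finrank ℝ E < finrank ℝ V →
      ∀ A B : Set V, CC A → CC B → A ⊆ E → (∀ y ∈ B, ∀ x ∈ E, inner ℝ x y = 0) →
      σ (A + B) = 0 := by
    intro E h1 h2 A B hA hB hAE hBE
    exact prod_zero hσ hcyl E h1 (IH _ (by omega) E rfl) hA hB hAE hBE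
  have hhom : ∀ t : ℝ, 0 < t → ∀ K : Set V, CC K → σ (t • K) = t * σ K := fun t ht K hK =>
    hom_of hσ (fun w hw r s hr hs => ortho_add hσ (by omega) hprod hw hr hs) ht hK
  have hseg : ∀ e : V, ‖e‖ = 1 → Nice σ 0 (Seg e 1) := by
    intro e he
    refine ⟨Seg_CC e 1, ⟨0, zero_mem_Seg e zero_le_one⟩, fun L hL hL0 => ?_⟩
    have h1 := hcyl e he {0} (CC.sing 0) (by simp)
    have h2 := T_add hσ hhom 1 (by omega) (fun _ => e) L hL hL0
    rw [← Seg_eq_T] at h2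
    rw [add_comm, add_sing_zero] at h1
    rw [h2, h1]
  obtain ⟨Z, hZ, hZb⟩ := exists_zonotope hseg
  obtain ⟨R', hR', hball⟩ := ball_val hσ hhom hZ hZb hZ hZb
  intro K hK
  refine simp_zero hσ.simp hσ.cont (fun w hw => ?_) hK
  have hT : Nice σ (σ (T w (finrank ℝ V) 1)) (T w (finrank ℝ V) 1) :=
    ⟨T_CC _ _ _, ⟨0, zero_mem_T _ _ zero_le_one⟩, fun L hL hL0 => T_add hσ hhom _ le_rfl w L hL hL0⟩
  obtain ⟨R, hR, hball2⟩ := ball_val hσ hhom hZ hZb (hT.add hZ) (by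
    intro x hx
    exact ⟨0, zero_mem_T _ _ zero_le_one, x, hZb hx, by simp⟩)
  rw [add_zero] at hball2
  have h1 : Metric.closedBall (0 : V) R = (R / R') • Metric.closedBall (0 : V) R' := by
    rw [smul_closedBall _ _ (by linarith), smul_zero, Real.norm_eq_abs,
      abs_of_pos (div_pos (by linarith) (by linarith)), div_mul_cancel₀ _ (by linarith)]
  rw [← hball2, h1, hhom _ (div_pos (by linarith) (by linarith)) _ (CC.ball R'), hball, mul_zero]

end VT

namespace VT
open scoped Pointwise
open Module

section final
variable {N : ℕ}

/-- the reflection as a linear isometry equivalence -/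
def rfI (u : EuclideanSpace ℝ (Fin N)) :
    EuclideanSpace ℝ (Fin N) ≃ₗᵢ[ℝ] EuclideanSpace ℝ (Fin N) where
  toLinearEquiv := LinearEquiv.ofInvolutive (rfL u) (rf_rf u)
  norm_map' := rf_norm u

lemma rfI_apply (u x : EuclideanSpace ℝ (Fin N)) : rfI u x = rf u x := rfl

lemma vol_img (T : EuclideanSpace ℝ (Fin N) ≃ₗᵢ[ℝ] EuclideanSpace ℝ (Fin N))
    (K : Set (EuclideanSpace ℝ (Fin N))) : volume (T '' K) = volume K := by
  have h := MeasurePreserving.measure_preimage_equiv (f := T.symm.toMeasurableEquiv)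
    T.symm.measurePreserving K
  rw [← h]
  congr 1
  exact T.toEquiv.image_eq_preimage_symm K

lemma flat_dim {u : EuclideanSpace ℝ (Fin N)} {c : ℝ} {K : Set (EuclideanSpace ℝ (Fin N))}
    (hu : u ≠ 0) (h : ∀ x ∈ K, inner ℝ u x = c) :
    finrank ℝ (affineSpan ℝ K).direction < N := by
  have h1 : (affineSpan ℝ K).direction ≤ (ℝ ∙ u)ᗮ := by
    rw [direction_affineSpan, vectorSpan_def, Submodule.span_le]
    rintro _ ⟨x, hx, y, hy, rfl⟩
    rw [SetLike.mem_coe, Submodule.mem_orthogonal_singleton_iff_inner_right]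
    simp [inner_sub_right, h x hx, h y hy]
  have h2 := Submodule.finrank_mono h1
  have h3 := Submodule.finrank_add_finrank_orthogonal (ℝ ∙ u)
  rw [finrank_span_singleton hu, finrank_euclideanSpace_fin] at h3
  omega

lemma flat_vol {K : Set (EuclideanSpace ℝ (Fin N))}
    (h : finrank ℝ (affineSpan ℝ K).direction < N) : volume K = 0 := by
  have h1 : affineSpan ℝ K ≠ ⊤ := by
    intro h0
    rw [h0, AffineSubspace.direction_top, finrank_top, finrank_euclideanSpace_fin] at h
    omega
  exact measure_mono_null (subset_affineSpan ℝ K) (Measure.addHaar_affineSubspace volume _ h1)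

lemma iInter_CC {K : ℕ → Set (EuclideanSpace ℝ (Fin N))} (hK : ∀ i, CC (K i)) :
    CC (⋂ i, K i) :=
  ⟨(hK 0).1.of_isClosed_subset (isClosed_iInter fun i => (hK i).1.isClosed)
    (Set.iInter_subset _ 0), convex_iInter fun i => (hK i).2⟩

lemma haus {K : ℕ → Set (EuclideanSpace ℝ (Fin N))} (hK : ∀ i, CC (K i)) (ha : Antitone K) :
    Tendsto (fun i => EMetric.hausdorffEdist (K i) (⋂ i, K i)) atTop (𝓝 0) := by
  rw [ENNReal.tendsto_nhds_zero]
  intro ε hε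
  obtain ⟨n, hn⟩ := exists_subset_nhds_of_isCompact (V := K)
    (U := {x | Metric.infEDist x (⋂ i, K i) < ε}) ha.directed_ge (fun i => (hK i).1) (by
      intro x hx
      refine IsOpen.mem_nhds ?_ ?_
      · exact isOpen_lt Metric.continuous_infEDist continuous_const
      · simpa [Metric.infEDist_zero_of_mem hx] using hε)
  filter_upwards [eventually_ge_atTop n] with i hi
  refine Metric.hausdorffEDist_le_of_infEDist (fun x hx => (hn (ha hi hx)).le) (fun x hx => ?_)
  rw [Metric.infEDist_zero_of_mem (Set.mem_iInter.1 hx i)]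
  exact zero_le

lemma good_vol : Good (fun K : Set (EuclideanSpace ℝ (Fin N)) => (volume K).toReal) where
  empty := by simp
  val K L hK hL _ := measureReal_union_add_inter (μ := volume) (s := K) hL.1.measurableSet
    hK.1.measure_lt_top.ne hL.1.measure_lt_top.ne
  trans v K _ := by
    have : volume ({v} + K) = volume K := by
      rw [Set.singleton_add, Set.image_add_left, measure_preimage_add]
    simp only [this]
  refl u K _ := by
    have := vol_img (rfI u) K
    have e : rfI u '' K = rf u '' K := rfl
    rw [e] at this
    simp only [this]
  flat u c K hK hu h := by
    simp only [flat_vol (flat_dim hu h), ENNReal.toReal_zero]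
  cont K hK ha := by
    refine (ENNReal.tendsto_toReal (iInter_CC hK).1.measure_lt_top.ne).comp ?_
    exact tendsto_measure_iInter_atTop (fun i => (hK i).1.measurableSet.nullMeasurableSet) ha
      ⟨0, (hK 0).1.measure_lt_top.ne⟩

lemma Good.sub {σ τ : Set (EuclideanSpace ℝ (Fin N)) → ℝ} (hs : Good σ) (ht : Good τ) (c : ℝ) :
    Good (fun K => σ K - c * τ K) where
  empty := by simp [hs.empty, ht.empty]
  val K L hK hL h := by
    have h1 := hs.val K L hK hL h
    have h2 := ht.val K L hK hL h
    linear_combination h1 - c * h2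
  trans v K hK := by simp only [hs.trans v K hK, ht.trans v K hK]
  refl v K hK := by simp only [hs.refl v K hK, ht.refl v K hK]
  flat u c' K hK hu h := by simp [hs.flat u c' K hK hu h, ht.flat u c' K hK hu h]
  cont K hK ha := (hs.cont K hK ha).sub ((ht.cont K hK ha).const_mul c)

/-- the standard cube -/
def stdcube (N : ℕ) : Set (EuclideanSpace ℝ (Fin N)) := {x | ∀ i, x i ∈ Set.Icc (0:ℝ) 1}

lemma vol_stdcube : volume (stdcube N) = 1 := by
  have h := (PiLp.volume_preserving_ofLp (Fin N)).measure_preimage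
    (s := Set.Icc (fun _ => (0:ℝ)) (fun _ => 1)) measurableSet_Icc.nullMeasurableSet
  rw [Real.volume_Icc_pi] at h
  simp only [sub_zero, ENNReal.ofReal_one, Finset.prod_const_one] at h
  rw [← h]
  congr 1
  ext x
  simp only [stdcube, Set.mem_ofPred_eq, Set.mem_Icc, Set.mem_preimage, Pi.le_def]
  exact forall_and

lemma cube_img (ι : Type) [Fintype ι] (b : ι → EuclideanSpace ℝ (Fin N)) (hb : Orthonormal ℝ b)
    (hcard : Fintype.card ι = finrank ℝ (EuclideanSpace ℝ (Fin N))) :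
    ∃ T : EuclideanSpace ℝ (Fin N) ≃ₗᵢ[ℝ] EuclideanSpace ℝ (Fin N),
      T '' {x | ∀ i, inner ℝ (b i) x ∈ Set.Icc (0:ℝ) 1} = stdcube N := by
  have e : ι ≃ Fin N := Fintype.equivFinOfCardEq (by rw [hcard, finrank_euclideanSpace_fin])
  let B : OrthonormalBasis (Fin N) ℝ (EuclideanSpace ℝ (Fin N)) :=
    (OrthonormalBasis.mk hb (hb.linearIndependent.span_eq_top_of_card_eq_finrank' hcard).ge).reindex e
  have hB : ∀ i, B (e i) = b i := by
    intro i
    simp [B]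
  refine ⟨B.repr, ?_⟩
  have : (B.repr '' {x | ∀ i, inner ℝ (b i) x ∈ Set.Icc (0:ℝ) 1}) =
      B.repr.symm ⁻¹' {x | ∀ i, inner ℝ (b i) x ∈ Set.Icc (0:ℝ) 1} :=
    B.repr.toEquiv.image_eq_preimage_symm _
  rw [this]
  ext y
  simp only [Set.mem_preimage, Set.mem_ofPred_eq, stdcube]
  have h2 : ∀ i, inner ℝ (b i) (B.repr.symm y) = y (e i) := by
    intro i
    rw [← hB, ← B.repr_apply_apply, LinearIsometryEquiv.apply_symm_apply]
  simp only [h2]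
  exact ⟨fun h i => by simpa using h (e.symm i), fun h i => h (e i)⟩

lemma good_sigma (σ : Set (EuclideanSpace ℝ (Fin N)) → ℝ)
    (hempty : σ ∅ = 0)
    (hval : ∀ K L : Set (EuclideanSpace ℝ (Fin N)),
      IsConvexBody K → IsConvexBody L → IsConvexBody (K ∪ L) →
      σ (K ∪ L) + σ (K ∩ L) = σ K + σ L)
    (hinv : ∀ (T : EuclideanSpace ℝ (Fin N) ≃ᵢ EuclideanSpace ℝ (Fin N))
      (K : Set (EuclideanSpace ℝ (Fin N))), IsConvexBody K → σ (T '' K) = σ K)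
    (hsimple : ∀ K : Set (EuclideanSpace ℝ (Fin N)), IsConvexBody K →
      Module.finrank ℝ (affineSpan ℝ K).direction < N → σ K = 0)
    (hcont : ∀ (Ki : ℕ → Set (EuclideanSpace ℝ (Fin N)))
      (K : Set (EuclideanSpace ℝ (Fin N))),
      (∀ i, IsConvexBody (Ki i)) → IsConvexBody K → Antitone Ki →
      Tendsto (fun i => EMetric.hausdorffEdist (Ki i) K) atTop (𝓝 0) →
      Tendsto (fun i => σ (Ki i)) atTop (𝓝 (σ K))) : Good σ where
  empty := hempty
  val K L hK hL h := by
    rcases K.eq_empty_or_nonempty with rfl | hK0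
    · simp [hempty]
    rcases L.eq_empty_or_nonempty with rfl | hL0
    · simp [hempty]
    exact hval K L ⟨hK0, hK⟩ ⟨hL0, hL⟩ ⟨hK0.mono Set.subset_union_left, hK.1.union hL.1, h⟩
  trans v K hK := by
    rcases K.eq_empty_or_nonempty with rfl | hK0
    · simp
    have := hinv (IsometryEquiv.addLeft v) K ⟨hK0, hK⟩
    rw [← this, Set.singleton_add]
    rfl
  refl u K hK := by
    rcases K.eq_empty_or_nonempty with rfl | hK0
    · simp
    exact hinv (rfI u).toIsometryEquiv K ⟨hK0, hK⟩
  flat u c K hK hu h := by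
    rcases K.eq_empty_or_nonempty with rfl | hK0
    · exact hempty
    exact hsimple K ⟨hK0, hK⟩ (flat_dim hu h)
  cont K hK ha := by
    by_cases hne : ∀ i, (K i).Nonempty
    · refine hcont K _ (fun i => ⟨hne i, hK i⟩) ⟨?_, iInter_CC hK⟩ ha (haus hK ha)
      exact IsCompact.nonempty_iInter_of_sequence_nonempty_isCompact_isClosed K
        (fun i => ha (Nat.le_succ i)) hne (hK 0).1 (fun i => (hK i).1.isClosed)
    · push Not at hne
      obtain ⟨n, hn⟩ := hne
      have h0 : (⋂ i, K i) = ∅ := Set.subset_empty_iff.1 (hn ▸ Set.iInter_subset K n)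
      rw [h0]
      refine tendsto_const_nhds.congr' ?_
      filter_upwards [eventually_ge_atTop n] with i hi
      have h1 : K i = ∅ := Set.subset_empty_iff.1 (hn ▸ ha hi)
      rw [h1]

theorem final (σ : Set (EuclideanSpace ℝ (Fin N)) → ℝ) (hσ : Good σ)
    (hinv : ∀ (T : EuclideanSpace ℝ (Fin N) ≃ᵢ EuclideanSpace ℝ (Fin N))
      (K : Set (EuclideanSpace ℝ (Fin N))), IsConvexBody K → σ (T '' K) = σ K) :
    ∃ c : ℝ, ∀ K : Set (EuclideanSpace ℝ (Fin N)), IsConvexBody K →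
      σ K = c * (volume K).toReal := by
  refine ⟨σ (stdcube N), fun K hK => ?_⟩
  have := van N (EuclideanSpace ℝ (Fin N)) finrank_euclideanSpace_fin
    (fun K => σ K - σ (stdcube N) * (volume K).toReal) (hσ.sub good_vol _) ?_ K hK.2
  · linarith
  intro ι _ b hb hcard
  obtain ⟨T, hT⟩ := cube_img ι b hb hcard
  have h1 := vol_img T {x | ∀ i, inner ℝ (b i) x ∈ Set.Icc (0:ℝ) 1}
  have h2 := hinv T.toIsometryEquiv {x | ∀ i, inner ℝ (b i) x ∈ Set.Icc (0:ℝ) 1}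
    ⟨⟨0, by simp⟩, cube_CC hb hcard⟩
  have h3 : (T.toIsometryEquiv '' {x | ∀ i, inner ℝ (b i) x ∈ Set.Icc (0:ℝ) 1}) = stdcube N := hT
  rw [h3] at h2
  rw [hT, vol_stdcube] at h1
  simp only [← h1, ← h2, ENNReal.toReal_one, mul_one, sub_self]

end final
end VT

/-- Volume theorem: a rigid motion invariant, simple valuation on convex bodies of `ℝ^N`
(vanishing on the empty set), continuous along decreasing sequences converging in the
Hausdorff metric, is a constant multiple of the `N`-dimensional volume. -/
theorem volume_theorem {N : ℕ}
    (σ : Set (EuclideanSpace ℝ (Fin N)) → ℝ)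
    (hempty : σ ∅ = 0)
    (hval : ∀ K L : Set (EuclideanSpace ℝ (Fin N)),
      IsConvexBody K → IsConvexBody L → IsConvexBody (K ∪ L) →
      σ (K ∪ L) + σ (K ∩ L) = σ K + σ L)
    (hinv : ∀ (T : EuclideanSpace ℝ (Fin N) ≃ᵢ EuclideanSpace ℝ (Fin N))
      (K : Set (EuclideanSpace ℝ (Fin N))), IsConvexBody K → σ (T '' K) = σ K)
    (hsimple : ∀ K : Set (EuclideanSpace ℝ (Fin N)), IsConvexBody K →
      Module.finrank ℝ (affineSpan ℝ K).direction < N → σ K = 0)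
    (hcont : ∀ (Ki : ℕ → Set (EuclideanSpace ℝ (Fin N)))
      (K : Set (EuclideanSpace ℝ (Fin N))),
      (∀ i, IsConvexBody (Ki i)) → IsConvexBody K → Antitone Ki →
      Tendsto (fun i => EMetric.hausdorffEdist (Ki i) K) atTop (𝓝 0) →
      Tendsto (fun i => σ (Ki i)) atTop (𝓝 (σ K))) :
    ∃ c : ℝ, ∀ K : Set (EuclideanSpace ℝ (Fin N)), IsConvexBody K →
      σ K = c * (volume K).toReal := by
  exact VT.final σ (VT.good_sigma σ hempty hval hinv hsimple hcont) hinv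

end
end

section
/- Let φ : [0,∞) → ℝ be continuous and such that φ ≡ 0 on [0,δ] for some δ > 0. Then for every f ∈ C^N the function x ↦ φ(f(x)) is Lebesgue integrable on ℝ^N, and the map μ : C^N → ℝ defined by μ(f) = ∫_{ℝ^N} φ(f(x)) dx is an invariant, continuous and simple valuation on C^N. -/
open Filter Topology MeasureTheory

noncomputable section

/-- A function `f : ℝ^N → ℝ` is quasi-concave if it is nonnegative and all its
superlevel sets `{x | t ≤ f x}` for `t > 0` are empty or compact and convex. -/
def QuasiConcave {N : ℕ} (f : EuclideanSpace ℝ (Fin N) → ℝ) : Prop :=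
  (∀ x, 0 ≤ f x) ∧
  ∀ t : ℝ, 0 < t →
    {x | t ≤ f x} = ∅ ∨ (IsCompact {x | t ≤ f x} ∧ Convex ℝ {x | t ≤ f x})

/-- `μ` is a valuation on `C^N`: it vanishes on the zero function and satisfies
the inclusion-exclusion property with respect to pointwise max and min. -/
def IsValuation {N : ℕ} (μ : (EuclideanSpace ℝ (Fin N) → ℝ) → ℝ) : Prop :=
  μ (fun _ => 0) = 0 ∧
  ∀ f g : EuclideanSpace ℝ (Fin N) → ℝ,
    QuasiConcave f → QuasiConcave g →
    QuasiConcave (fun x => max (f x) (g x)) →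
    μ (fun x => max (f x) (g x)) + μ (fun x => min (f x) (g x)) = μ f + μ g

/-- `μ` is invariant under rigid motions (isometries) of `ℝ^N`. -/
def IsInvariantVal {N : ℕ} (μ : (EuclideanSpace ℝ (Fin N) → ℝ) → ℝ) : Prop :=
  ∀ (T : EuclideanSpace ℝ (Fin N) ≃ᵢ EuclideanSpace ℝ (Fin N))
    (f : EuclideanSpace ℝ (Fin N) → ℝ), QuasiConcave f →
    μ (fun x => f (T x)) = μ f

/-- `μ` is continuous: it preserves limits of monotone pointwise convergent
sequences of quasi-concave functions. -/
def IsContinuousVal {N : ℕ} (μ : (EuclideanSpace ℝ (Fin N) → ℝ) → ℝ) : Prop :=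
  ∀ (fi : ℕ → EuclideanSpace ℝ (Fin N) → ℝ) (f : EuclideanSpace ℝ (Fin N) → ℝ),
    (∀ i, QuasiConcave (fi i)) → QuasiConcave f →
    (Monotone fi ∨ Antitone fi) →
    (∀ x, Tendsto (fun i => fi i x) atTop (𝓝 (f x))) →
    Tendsto (fun i => μ (fi i)) atTop (𝓝 (μ f))

/-- `μ` is simple: it vanishes on quasi-concave functions which are zero a.e. -/
def IsSimpleVal {N : ℕ} (μ : (EuclideanSpace ℝ (Fin N) → ℝ) → ℝ) : Prop :=
  ∀ f : EuclideanSpace ℝ (Fin N) → ℝ, QuasiConcave f →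
    (∀ᵐ x : EuclideanSpace ℝ (Fin N), f x = 0) → μ f = 0

/-- `μ` is monotone increasing: `f ≤ g` pointwise implies `μ f ≤ μ g`. -/
def IsMonotoneVal {N : ℕ} (μ : (EuclideanSpace ℝ (Fin N) → ℝ) → ℝ) : Prop :=
  ∀ f g : EuclideanSpace ℝ (Fin N) → ℝ, QuasiConcave f → QuasiConcave g →
    (∀ x, f x ≤ g x) → μ f ≤ μ g

theorem QuasiConcave.measurable {N : ℕ} {f : EuclideanSpace ℝ (Fin N) → ℝ}
    (hf : QuasiConcave f) : Measurable f := by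
  refine measurable_of_Ici fun t => ?_
  rcases lt_or_ge 0 t with ht | ht
  · rcases hf.2 t ht with h | h
    · have : f ⁻¹' Set.Ici t = ∅ := h
      rw [this]; exact MeasurableSet.empty
    · exact h.1.measurableSet
  · have : f ⁻¹' Set.Ici t = Set.univ := by
      ext x; simpa using ht.trans (hf.1 x)
    rw [this]; exact MeasurableSet.univ

theorem QuasiConcave.isCompact_level {N : ℕ} {f : EuclideanSpace ℝ (Fin N) → ℝ}
    (hf : QuasiConcave f) {t : ℝ} (ht : 0 < t) : IsCompact {x | t ≤ f x} := by
  rcases hf.2 t ht with h | h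
  · rw [h]; exact isCompact_empty
  · exact h.1

theorem QuasiConcave.bounded {N : ℕ} {f : EuclideanSpace ℝ (Fin N) → ℝ}
    (hf : QuasiConcave f) : ∃ M, ∀ x, f x ≤ M := by
  by_contra! hcon
  have hpos : ∀ n : ℕ, (0:ℝ) < n + 1 := fun n => by positivity
  obtain ⟨x, hx⟩ := IsCompact.nonempty_iInter_of_sequence_nonempty_isCompact_isClosed
    (fun n : ℕ => {x | (n : ℝ) + 1 ≤ f x})
    (fun n x (hx : ((n + 1 : ℕ) : ℝ) + 1 ≤ f x) => by
      push_cast at hx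
      show (n : ℝ) + 1 ≤ f x
      linarith)
    (fun n => by
      obtain ⟨x, hx⟩ := hcon (n + 1)
      exact ⟨x, hx.le⟩)
    (hf.isCompact_level (hpos 0))
    (fun n => (hf.isCompact_level (hpos n)).isClosed)
  obtain ⟨n, hn⟩ := exists_nat_gt (f x)
  have h : (n : ℝ) + 1 ≤ f x := Set.mem_iInter.1 hx n
  linarith

theorem QuasiConcave.dominated {N : ℕ} {g : EuclideanSpace ℝ (Fin N) → ℝ}
    (hg : QuasiConcave g) (φ : ℝ → ℝ) (δ : ℝ) (hδ : 0 < δ)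
    (hφc : ContinuousOn φ (Set.Ici 0)) (hφ0 : ∀ t ∈ Set.Icc (0:ℝ) δ, φ t = 0) :
    ∃ B : EuclideanSpace ℝ (Fin N) → ℝ, Integrable B ∧
      ∀ x t, 0 ≤ t → t ≤ g x → ‖φ t‖ ≤ B x := by
  obtain ⟨M, hM⟩ := hg.bounded
  obtain ⟨C, hC⟩ := isCompact_Icc.exists_bound_of_continuousOn
    (hφc.mono (Set.Icc_subset_Ici_self : Set.Icc 0 M ⊆ Set.Ici 0))
  have hK := hg.isCompact_level hδ
  refine ⟨Set.indicator {x | δ ≤ g x} (fun _ => C), ?_, ?_⟩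
  · rw [integrable_indicator_iff hK.measurableSet]
    exact integrableOn_const hK.measure_lt_top.ne
  · intro x t ht0 ht
    by_cases hx : δ ≤ g x
    · rw [Set.indicator_of_mem (show x ∈ {x | δ ≤ g x} from hx)]
      exact hC t ⟨ht0, ht.trans (hM x)⟩
    · rw [Set.indicator_of_notMem (show x ∉ {x | δ ≤ g x} from hx),
        hφ0 t ⟨ht0, by linarith⟩, norm_zero]

theorem aesm_phi_comp {N : ℕ} {h : EuclideanSpace ℝ (Fin N) → ℝ} (hm : Measurable h)
    (h0 : ∀ x, 0 ≤ h x) (φ : ℝ → ℝ) (hφc : ContinuousOn φ (Set.Ici 0)) :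
    AEStronglyMeasurable (fun x => φ (h x)) volume := by
  have hc : Continuous (fun t : ℝ => φ (max 0 t)) :=
    hφc.comp_continuous (by fun_prop) (fun t => le_max_left 0 t)
  have : (fun x => φ (h x)) = fun x => (fun t : ℝ => φ (max 0 t)) (h x) := by
    ext x; simp [max_eq_right (h0 x)]
  rw [this]
  exact (hc.measurable.comp hm).aestronglyMeasurable

theorem integrable_phi_comp {N : ℕ} {g h : EuclideanSpace ℝ (Fin N) → ℝ}
    (hg : QuasiConcave g) (hm : Measurable h) (h0 : ∀ x, 0 ≤ h x) (hle : ∀ x, h x ≤ g x)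
    (φ : ℝ → ℝ) (δ : ℝ) (hδ : 0 < δ)
    (hφc : ContinuousOn φ (Set.Ici 0)) (hφ0 : ∀ t ∈ Set.Icc (0:ℝ) δ, φ t = 0) :
    Integrable (fun x => φ (h x)) := by
  obtain ⟨B, hB, hb⟩ := hg.dominated φ δ hδ hφc hφ0
  exact hB.mono' (aesm_phi_comp hm h0 φ hφc)
    (Eventually.of_forall fun x => hb x _ (h0 x) (hle x))

/-- If `φ : [0,∞) → ℝ` is continuous and vanishes on `[0,δ]` for some `δ > 0`, then
`x ↦ φ(f(x))` is Lebesgue integrable for every quasi-concave `f`, and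
`f ↦ ∫ φ(f(x)) dx` is an invariant, continuous and simple valuation on `C^N`. -/
theorem integral_simple_valuation {N : ℕ} (φ : ℝ → ℝ) (δ : ℝ) (hδ : 0 < δ)
    (hφc : ContinuousOn φ (Set.Ici 0))
    (hφ0 : ∀ t ∈ Set.Icc (0:ℝ) δ, φ t = 0) :
    (∀ f : EuclideanSpace ℝ (Fin N) → ℝ, QuasiConcave f →
      Integrable (fun x => φ (f x))) ∧
    IsValuation (N := N) (fun f => ∫ x, φ (f x)) ∧
    IsInvariantVal (N := N) (fun f => ∫ x, φ (f x)) ∧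
    IsContinuousVal (N := N) (fun f => ∫ x, φ (f x)) ∧
    IsSimpleVal (N := N) (fun f => ∫ x, φ (f x)) := by
  have hint : ∀ f : EuclideanSpace ℝ (Fin N) → ℝ, QuasiConcave f →
      Integrable (fun x => φ (f x)) := fun f hf =>
    integrable_phi_comp hf hf.measurable hf.1 (fun _ => le_rfl) φ δ hδ hφc hφ0
  have hz : φ 0 = 0 := hφ0 0 ⟨le_rfl, hδ.le⟩
  refine ⟨hint, ⟨?_, ?_⟩, ?_, ?_, ?_⟩
  · simp [hz]
  · intro f g hf hg hfg
    have hmin : Integrable (fun x => φ (min (f x) (g x))) :=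
      integrable_phi_comp hf (hf.measurable.min hg.measurable)
        (fun x => le_min (hf.1 x) (hg.1 x)) (fun x => min_le_left _ _) φ δ hδ hφc hφ0
    show (∫ x, φ (max (f x) (g x))) + (∫ x, φ (min (f x) (g x)))
      = (∫ x, φ (f x)) + ∫ x, φ (g x)
    rw [← integral_add (hint _ hfg) hmin, ← integral_add (hint _ hf) (hint _ hg)]
    refine integral_congr_ae (Eventually.of_forall fun x => ?_)
    rcases le_total (f x) (g x) with h | h
    · simp [h, add_comm]
    · simp [h]
  · intro T f hf
    show (∫ x, φ (f (T x))) = ∫ x, φ (f x)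
    have hT : ∀ x, T x = T.toRealLinearIsometryEquiv x + T 0 := by
      intro x; simp
    have hT2 : (fun x => φ (f (T x))) =
        fun x => φ (f (T.toRealLinearIsometryEquiv x + T 0)) :=
      funext fun x => congrArg (fun y => φ (f y)) (hT x)
    rw [hT2]
    rw [T.toRealLinearIsometryEquiv.measurePreserving.integral_comp
      T.toRealLinearIsometryEquiv.toHomeomorph.measurableEmbedding
      (fun y => φ (f (y + T 0)))]
    exact integral_add_right_eq_self (fun y => φ (f y)) (T 0)
  · intro fi f hfi hf hmono hlim
    obtain ⟨g, hg, hle⟩ : ∃ g, QuasiConcave g ∧ ∀ i x, fi i x ≤ g x := by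
      rcases hmono with h | h
      · exact ⟨f, hf, fun i x =>
          Monotone.ge_of_tendsto (fun a b hab => h hab x) (hlim x) i⟩
      · exact ⟨fi 0, hfi 0, fun i x => h (Nat.zero_le i) x⟩
    obtain ⟨B, hB, hb⟩ := hg.dominated φ δ hδ hφc hφ0
    refine tendsto_integral_of_dominated_convergence B
      (fun i => (hint _ (hfi i)).aestronglyMeasurable) hB
      (fun i => Eventually.of_forall fun x => hb x _ ((hfi i).1 x) (hle i x))
      (Eventually.of_forall fun x => ?_)
    exact (hφc (f x) (hf.1 x)).tendsto.comp
      (tendsto_nhdsWithin_iff.2 ⟨hlim x, Eventually.of_forall fun i => (hfi i).1 x⟩)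
  · intro f hf h0
    show (∫ x, φ (f x)) = 0
    refine integral_eq_zero_of_ae ?_
    filter_upwards [h0] with x hx
    simp [hx, hz]

end
end
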